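/- arXiv:1008.4908 — 2 statements merged into one kernel-verified Lean document; each statement's English description precedes it below -/
import Mathlib

section
/- Let D be an infinite field and let k ≥ 1 and n ≥ 1 satisfy n ≥ 2k − 1. Then the relative integral group homology H_k(SL_{n+1}(D), SL_n(D); Z) vanishes; equivalently, the map H_k(SL_n(D); Z) → H_k(SL_{n+1}(D); Z) induced by the block embedding A ↦ diag(A, 1) is surjective, and the induced map H_{k−1}(SL_n(D); Z) → H_{k−1}(SL_{n+1}(D); Z) is injective. -/
namespace Stmt0

open Finsupp in
/-- The `n`-th differential of the (inhomogeneous) bar complex computing the homology of the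
group `G` with trivial coefficients in the commutative ring `R`.  The module of `n`-chains is
the free `R`-module on `n`-tuples of elements of `G`, and on a basis element
`(g₁, …, g_{n+1})` the differential is
`(g₂,…,g_{n+1}) + ∑ᵢ (-1)ⁱ (g₁,…,gᵢgᵢ₊₁,…,g_{n+1}) + (-1)^{n+1} (g₁,…,g_n)`. -/
noncomputable def barDiff (R : Type) [CommRing R] (G : Type*) [Group G] (n : ℕ) :
    ((Fin (n + 1) → G) →₀ R) →ₗ[R] ((Fin n → G) →₀ R) :=
  Finsupp.lift ((Fin n → G) →₀ R) R (Fin (n + 1) → G) fun c =>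
    Finsupp.single (fun j : Fin n => c j.succ) (1 : R)
      + ∑ i : Fin n, Finsupp.single
          (fun j : Fin n => if (j : ℕ) < (i : ℕ) then c (Fin.castSucc j)
            else if (j : ℕ) = (i : ℕ) then c (Fin.castSucc i) * c i.succ
            else c j.succ) ((-1 : R) ^ ((i : ℕ) + 1))
      + Finsupp.single (fun j : Fin n => c (Fin.castSucc j)) ((-1 : R) ^ (n + 1))

/-- The submodule of `k`-cycles of the bar complex of `G` (with trivial coefficients `R`). -/
noncomputable def barCycles (R : Type) [CommRing R] (G : Type*) [Group G] :
    (k : ℕ) → Submodule R ((Fin k → G) →₀ R)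
  | 0 => ⊤
  | (k + 1) => LinearMap.ker (barDiff R G k)

/-- The submodule of `k`-boundaries of the bar complex of `G`. -/
noncomputable def barBoundaries (R : Type) [CommRing R] (G : Type*) [Group G] (k : ℕ) :
    Submodule R ((Fin k → G) →₀ R) :=
  LinearMap.range (barDiff R G k)

/-- Group homology `H_k(G; R)` with trivial coefficients, defined via the bar complex as the
image of the `k`-cycles in the quotient of the `k`-chains by the `k`-boundaries
(i.e. as `Z_k / B_k`). -/
noncomputable def barHomology (R : Type) [CommRing R] (G : Type*) [Group G] (k : ℕ) :=
  ↥(Submodule.map (barBoundaries R G k).mkQ (barCycles R G k))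

noncomputable instance (R : Type) [CommRing R] (G : Type*) [Group G] (k : ℕ) :
    AddCommGroup (barHomology R G k) :=
  inferInstanceAs (AddCommGroup ↥(Submodule.map (barBoundaries R G k).mkQ (barCycles R G k)))

noncomputable instance (R : Type) [CommRing R] (G : Type*) [Group G] (k : ℕ) :
    Module R (barHomology R G k) :=
  inferInstanceAs (Module R ↥(Submodule.map (barBoundaries R G k).mkQ (barCycles R G k)))

/-- The map induced on bar chains by a map `φ : G' → G` of groups; for a group homomorphism
`φ` this is the usual chain map inducing `H_k(φ) : H_k(G'; R) → H_k(G; R)`. -/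
noncomputable def barMap (R : Type) [CommRing R] {G' G : Type*} [Group G'] [Group G]
    (φ : G' → G) (k : ℕ) : ((Fin k → G') →₀ R) →ₗ[R] ((Fin k → G) →₀ R) :=
  Finsupp.lmapDomain R R fun c => φ ∘ c

/-- The statement that the map `H_k(G'; R) → H_k(G; R)` induced by `φ : G' → G` is
surjective, expressed at the chain level of the bar complexes:  every `k`-cycle of `G` differs
from the image of a `k`-cycle of `G'` by a `k`-boundary. -/
def BarInducedSurj (R : Type) [CommRing R] {G' G : Type*} [Group G'] [Group G]
    (φ : G' → G) (k : ℕ) : Prop :=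
  ∀ z ∈ barCycles R G k, ∃ w ∈ barCycles R G' k,
    z - barMap R φ k w ∈ barBoundaries R G k

/-- The statement that the map `H_k(G'; R) → H_k(G; R)` induced by `φ : G' → G` is
injective, expressed at the chain level of the bar complexes:  a `k`-cycle of `G'` whose image
is a `k`-boundary of `G` is already a `k`-boundary of `G'`. -/
def BarInducedInj (R : Type) [CommRing R] {G' G : Type*} [Group G'] [Group G]
    (φ : G' → G) (k : ℕ) : Prop :=
  ∀ w ∈ barCycles R G' k,
    barMap R φ k w ∈ barBoundaries R G k → w ∈ barBoundaries R G' k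

/-- The block embedding `SL_n(D) → SL_{n+1}(D)`, `A ↦ diag(A, 1)`, sending a matrix `A` to
the block-diagonal matrix with blocks `A` and `1`. -/
noncomputable def slEmb (D : Type) [Field D] (n : ℕ) :
    Matrix.SpecialLinearGroup (Fin n) D → Matrix.SpecialLinearGroup (Fin (n + 1)) D :=
  fun A =>
    ⟨(Matrix.fromBlocks (A : Matrix (Fin n) (Fin n) D) 0 0
        (1 : Matrix (Fin 1) (Fin 1) D)).submatrix finSumFinEquiv.symm finSumFinEquiv.symm, by
      rw [Matrix.det_submatrix_equiv_self, Matrix.det_fromBlocks_zero₂₁]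
      simp [A.2]⟩

/-!
The group `SL_m(D)` acts on the complex of nondegenerate lists of pairs (vector, covector) with
covector equal to `1` on the vector. It is highly acyclic because `D` is infinite: a generic pair
cones off any finite set of simplices. Its orbits are understood, and stabilizers of simplices are
special linear groups of smaller rank. Comparing this complex with the one on which the stabilizer
of the last pair acts reduces `H_k` of `(SL_{n+1}, SL_n)` to lower degrees, except for the map
induced from the stabilizer of one further pair orthogonal to the last. That map is zero: the
quarter turn in the plane of the two pairs exchanges their stabilizers, and it lies in the perfect
group `SL₂` of that plane, which centralizes the common stabilizer.
-/

section ListChains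

open Finsupp

variable {α β M M' : Type*} [AddCommGroup M'] [AddCommGroup M]

/-- The linear extension of `l ↦ a :: l`, the cone with apex `a`. -/
noncomputable def consChain (a : α) : (List α →₀ M) →ₗ[ℤ] (List α →₀ M) :=
  lmapDomain M ℤ (List.cons a)

/-- The chain map induced by a map `f` of vertices. -/
noncomputable def mapChain (f : α → β) : (List α →₀ M) →ₗ[ℤ] (List β →₀ M) :=
  lmapDomain M ℤ (List.map f)

/-- The alternating sum of the faces of a list, with coefficient `m`; the recursion expresses that
the boundary of a cone is its base minus the cone over the boundary of the base. -/
noncomputable def faces : List α → M →ₗ[ℤ] (List α →₀ M)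
  | [] => 0
  | a :: l => lsingle l - consChain a ∘ₗ faces l

/-- The augmented simplicial boundary `∑ᵢ (-1)ⁱ (a₀, …, âᵢ, …, aₚ)` on the free module on finite
sequences, with coefficients in `M`.  A list of length `p + 1` is a `p`-simplex; the empty list
spans the augmentation term. -/
noncomputable def boundary : (List α →₀ M) →ₗ[ℤ] (List α →₀ M) :=
  Finsupp.lsum ℤ faces

@[simp]
lemma consChain_single (a : α) (l : List α) (m : M) :
    consChain a (single l m) = single (a :: l) m := by
  simp [consChain]

@[simp]
lemma mapChain_single (f : α → β) (l : List α) (m : M) :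
    mapChain f (single l m) = single (l.map f) m := by
  simp [mapChain]

@[simp]
lemma boundary_single (l : List α) (m : M) : boundary (single l m) = faces l m := by
  simp [boundary]

lemma boundary_consChain (a : α) (c : List α →₀ M) :
    boundary (consChain a c) = c - consChain a (boundary c) := by
  induction c using Finsupp.induction_linear with
  | zero => simp
  | add c c' hc hc' => simp only [map_add, hc, hc']; abel
  | single l m => simp [faces]

lemma mapChain_mapChain {γ : Type*} (g : β → γ) (f : α → β) (c : List α →₀ M) :
    mapChain g (mapChain f c) = mapChain (fun a => g (f a)) c := by
  induction c using Finsupp.induction_linear with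
  | zero => simp
  | add c c' hc hc' => simp only [map_add, hc, hc']
  | single l m => simp [Function.comp_def]

lemma mapChain_consChain (f : α → β) (a : α) (c : List α →₀ M) :
    mapChain f (consChain a c) = consChain (f a) (mapChain f c) := by
  induction c using Finsupp.induction_linear with
  | zero => simp
  | add c c' hc hc' => simp only [map_add, hc, hc']
  | single l m => simp

lemma listChain_hom_ext {N : Type*} [AddCommGroup N] {φ ψ : (List α →₀ M) →ₗ[ℤ] N}
    (nil : ∀ m, φ (single [] m) = ψ (single [] m))
    (cons : ∀ a l, (∀ m, φ (single l m) = ψ (single l m)) →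
      ∀ m, φ (consChain a (single l m)) = ψ (consChain a (single l m))) (c : List α →₀ M) :
    φ c = ψ c := by
  suffices φ = ψ from LinearMap.congr_fun this c
  refine Finsupp.lhom_ext fun l => ?_
  induction l with
  | nil => exact nil
  | cons a l ih => exact fun m => by simpa using cons a l ih m

lemma boundary_boundary (c : List α →₀ M) : boundary (boundary c) = 0 := by
  refine listChain_hom_ext (φ := boundary ∘ₗ boundary) (ψ := 0) (by simp [faces]) ?_ c
  intro a l ih m
  have ih' : boundary (boundary (single l m)) = 0 := ih m
  simp only [LinearMap.comp_apply, boundary_consChain, map_sub, ih', map_zero, sub_zero, sub_self,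
    LinearMap.zero_apply]

lemma boundary_mapChain (f : α → β) (c : List α →₀ M) :
    boundary (mapChain f c) = mapChain f (boundary c) := by
  refine listChain_hom_ext (φ := boundary ∘ₗ mapChain f) (ψ := mapChain f ∘ₗ boundary)
    (by simp [faces]) ?_ c
  intro a l ih m
  have ih' : boundary (mapChain f (single l m)) = mapChain f (boundary (single l m)) := ih m
  simp only [LinearMap.comp_apply, mapChain_consChain, boundary_consChain, map_sub, ih']

lemma boundary_mapRange (φ : M →ₗ[ℤ] M') (c : List α →₀ M) :
    boundary (mapRange.linearMap φ c) = mapRange.linearMap φ (boundary c) := by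
  have mapRange_consChain (a : α) (c : List α →₀ M) :
      mapRange.linearMap φ (consChain a c) = consChain a (mapRange.linearMap φ c) := by
    induction c using Finsupp.induction_linear with
    | zero => simp
    | add c c' hc hc' => simp only [map_add, hc, hc']
    | single l m => simp
  refine listChain_hom_ext (φ := boundary ∘ₗ mapRange.linearMap φ)
    (ψ := mapRange.linearMap φ ∘ₗ boundary) (by simp [faces]) ?_ c
  intro a l ih m
  have ih' : boundary (mapRange.linearMap φ (single l m)) =
    mapRange.linearMap φ (boundary (single l m)) := ih m
  simp only [LinearMap.comp_apply, mapRange_consChain, boundary_consChain, map_sub, ih']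

/-- The prism over a single list, with coefficient `m`. -/
noncomputable def prismFaces (f : α → α) : List α → M →ₗ[ℤ] (List α →₀ M)
  | [] => 0
  | a :: l => lsingle (a :: f a :: l.map f) - consChain a ∘ₗ prismFaces f l

/-- The prism operator `(a₀, …, aₚ) ↦ ∑ᵢ (-1)ⁱ (a₀, …, aᵢ, f aᵢ, …, f aₚ)`, a chain homotopy
between the identity and `mapChain f`. -/
noncomputable def prism (f : α → α) : (List α →₀ M) →ₗ[ℤ] (List α →₀ M) :=
  Finsupp.lsum ℤ (prismFaces f)

@[simp]
lemma prism_single (f : α → α) (l : List α) (m : M) :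
    prism f (single l m) = prismFaces f l m := by
  simp [prism]

lemma prism_consChain (f : α → α) (a : α) (c : List α →₀ M) :
    prism f (consChain a c) =
      consChain a (consChain (f a) (mapChain f c)) - consChain a (prism f c) := by
  induction c using Finsupp.induction_linear with
  | zero => simp
  | add c c' hc hc' => simp only [map_add, hc, hc']; abel
  | single l m => simp [prismFaces]

lemma boundary_prism_add (f : α → α) (c : List α →₀ M) :
    boundary (prism f c) + prism f (boundary c) = mapChain f c - c := by
  refine listChain_hom_ext (φ := boundary ∘ₗ prism f + prism f ∘ₗ boundary)
    (ψ := mapChain f - LinearMap.id) (by simp [faces, prismFaces]) ?_ c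
  intro a l ih m
  have ih' : consChain a (boundary (prism f (single l m)) + prism f (boundary (single l m))) =
      consChain a (mapChain f (single l m) - single l m) := congrArg (consChain a) (ih m)
  simp only [map_add, map_sub] at ih'
  simp only [LinearMap.add_apply, LinearMap.comp_apply, LinearMap.sub_apply, LinearMap.id_apply,
    prism_consChain, boundary_consChain, mapChain_consChain, map_sub, boundary_mapChain]
  rw [← sub_eq_zero] at ih' ⊢
  rw [← ih']
  abel

lemma mapChain_prism {f : α → α} {f' : β → β} {r : α → β} (h : ∀ a, f' (r a) = r (f a))
    (c : List α →₀ M) : mapChain r (prism f c) = prism f' (mapChain r c) := by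
  refine listChain_hom_ext (φ := mapChain r ∘ₗ prism f) (ψ := prism f' ∘ₗ mapChain r)
    (by simp [prismFaces]) ?_ c
  intro a l ih m
  have ih' : mapChain r (prism f (single l m)) = prism f' (mapChain r (single l m)) := ih m
  simp only [LinearMap.comp_apply, prism_consChain, mapChain_consChain, map_sub, h, ih']
  simp [Function.comp_def, h]

end ListChains

section Supported

open Finsupp

variable {α β ι M M' N : Type*} [AddCommGroup M] [AddCommGroup M'] [AddCommGroup N]

/-- Chains on a set of basis elements `S` with coefficients in a submodule `L`. -/
noncomputable def chainsOn (S : Set ι) (L : Submodule ℤ M) : Submodule ℤ (ι →₀ M) :=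
  supported M ℤ S ⊓ Finsupp.submodule fun _ => L

lemma apply_mem_of_mem_chainsOn {S : Set ι} {L : Submodule ℤ M} {c : ι →₀ M}
    (hc : c ∈ chainsOn S L) (s : ι) : c s ∈ L :=
  hc.2 s

lemma mem_of_mem_support_chainsOn {S : Set ι} {L : Submodule ℤ M} {c : ι →₀ M}
    (hc : c ∈ chainsOn S L) {s : ι} (hs : s ∈ c.support) : s ∈ S :=
  hc.1 hs

lemma single_mem_chainsOn {S : Set ι} {L : Submodule ℤ M} {s : ι} {m : M} (hs : s ∈ S)
    (hm : m ∈ L) : single s m ∈ chainsOn S L := by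
  classical
  refine ⟨single_mem_supported ℤ m hs, fun t => ?_⟩
  rw [single_apply]
  split_ifs
  exacts [hm, L.zero_mem]

lemma map_mem_of_mem_chainsOn {S : Set ι} {L : Submodule ℤ M} {K : Submodule ℤ N}
    (f : (ι →₀ M) →ₗ[ℤ] N) (h : ∀ s ∈ S, ∀ m ∈ L, f (single s m) ∈ K) {c : ι →₀ M}
    (hc : c ∈ chainsOn S L) : f c ∈ K := by
  rw [← c.sum_single, Finsupp.sum, map_sum]
  exact K.sum_mem fun s hs => h s (hc.1 hs) _ (hc.2 s)

lemma eq_of_mem_chainsOn {S : Set ι} {L : Submodule ℤ M} (f g : (ι →₀ M) →ₗ[ℤ] N)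
    (h : ∀ s ∈ S, ∀ m ∈ L, f (single s m) = g (single s m)) {c : ι →₀ M}
    (hc : c ∈ chainsOn S L) : f c = g c :=
  map_mem_of_mem_chainsOn (K := LinearMap.eqLocus f g) LinearMap.id h hc

lemma chainsOn_mono {S T : Set ι} {L L' : Submodule ℤ M} (hST : S ⊆ T) (hL : L ≤ L') :
    chainsOn S L ≤ chainsOn T L' :=
  fun _ hc => ⟨supported_mono hST hc.1, fun s => hL (hc.2 s)⟩

lemma mapRange_mem_chainsOn {S : Set ι} {L : Submodule ℤ M} {L' : Submodule ℤ M'}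
    {φ : M →ₗ[ℤ] M'} (hφ : ∀ m ∈ L, φ m ∈ L') {c : ι →₀ M} (hc : c ∈ chainsOn S L) :
    mapRange.linearMap φ c ∈ chainsOn S L' :=
  map_mem_of_mem_chainsOn _
    (fun s hs m hm => by simpa using single_mem_chainsOn hs (hφ m hm)) hc

lemma consChain_mem_chainsOn {S T : Set (List α)} {L : Submodule ℤ M} {a : α}
    (h : ∀ l ∈ S, a :: l ∈ T) {c : List α →₀ M} (hc : c ∈ chainsOn S L) :
    consChain a c ∈ chainsOn T L :=
  map_mem_of_mem_chainsOn _
    (fun l hl m hm => by simpa using single_mem_chainsOn (h l hl) hm) hc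

lemma mapChain_mem_chainsOn {S : Set (List α)} {T : Set (List β)} {L : Submodule ℤ M}
    {f : α → β} (h : ∀ l ∈ S, l.map f ∈ T) {c : List α →₀ M} (hc : c ∈ chainsOn S L) :
    mapChain f c ∈ chainsOn T L :=
  map_mem_of_mem_chainsOn _
    (fun l hl m hm => by simpa using single_mem_chainsOn (h l hl) hm) hc

lemma faces_mem_chainsOn {L : Submodule ℤ M} {m : M} (hm : m ∈ L) (l : List α) :
    ∀ T : Set (List α), (∀ i < l.length, l.eraseIdx i ∈ T) → faces l m ∈ chainsOn T L := by
  induction l with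
  | nil => exact fun T _ => (chainsOn T L).zero_mem
  | cons a l ih =>
    intro T hT
    refine Submodule.sub_mem _ (single_mem_chainsOn (by simpa using hT 0) hm) ?_
    refine consChain_mem_chainsOn (S := {l' | a :: l' ∈ T}) (fun _ h => h) (ih _ fun i hi => ?_)
    simpa using hT (i + 1) (by simpa using hi)

lemma boundary_mem_chainsOn {S T : Set (List α)} {L : Submodule ℤ M}
    (h : ∀ l ∈ S, ∀ i < l.length, l.eraseIdx i ∈ T) {c : List α →₀ M} (hc : c ∈ chainsOn S L) :
    boundary c ∈ chainsOn T L :=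
  map_mem_of_mem_chainsOn _
    (fun l hl m hm => by simpa using faces_mem_chainsOn hm l T (h l hl)) hc

/-- The lists of length `j` with entries in `G`, i.e. the `(j - 1)`-simplices of the full simplex
on the vertex set `G`. -/
def listsIn (G : Set α) (j : ℕ) : Set (List α) :=
  {l | l.length = j ∧ ∀ a ∈ l, a ∈ G}

/-- The chains of degree `j - 1` of the full simplex on the vertex set `G`. -/
noncomputable abbrev listChains (M : Type*) [AddCommGroup M] (G : Set α) (j : ℕ) :
    Submodule ℤ (List α →₀ M) :=
  chainsOn (listsIn G j) ⊤

lemma listsIn_mono {G G' : Set α} (h : G ⊆ G') (j : ℕ) : listsIn G j ⊆ listsIn G' j :=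
  fun _ hl => ⟨hl.1, fun a ha => h (hl.2 a ha)⟩

lemma listChains_mono {G G' : Set α} (h : G ⊆ G') (j : ℕ) :
    listChains M G j ≤ listChains M G' j :=
  chainsOn_mono (listsIn_mono h j) le_rfl

lemma cons_mem_listsIn {G : Set α} {j : ℕ} {a : α} (ha : a ∈ G) {l : List α}
    (hl : l ∈ listsIn G j) : a :: l ∈ listsIn G (j + 1) :=
  ⟨by simp [hl.1], by simpa using ⟨ha, hl.2⟩⟩

lemma map_mem_listsIn {G : Set α} {H : Set β} {j : ℕ} {f : α → β} (hf : ∀ a ∈ G, f a ∈ H)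
    {l : List α} (hl : l ∈ listsIn G j) : l.map f ∈ listsIn H j :=
  ⟨by simp [hl.1], by simpa using fun a ha => hf a (hl.2 a ha)⟩

lemma mapChain_mem_listChains {G : Set α} {H : Set β} {j : ℕ} {f : α → β}
    (hf : ∀ a ∈ G, f a ∈ H) {c : List α →₀ M} (hc : c ∈ listChains M G j) :
    mapChain f c ∈ listChains M H j :=
  mapChain_mem_chainsOn (fun _ => map_mem_listsIn hf) hc

lemma boundary_mem_listChains {G : Set α} {j : ℕ} {c : List α →₀ M}
    (hc : c ∈ listChains M G (j + 1)) : boundary c ∈ listChains M G j :=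
  boundary_mem_chainsOn (T := listsIn G j) (fun l hl i hi =>
    ⟨by rw [List.length_eraseIdx_of_lt hi, hl.1, Nat.add_sub_cancel],
      fun a ha => hl.2 a (List.mem_of_mem_eraseIdx ha)⟩) hc

lemma prism_mem_listChains {G : Set α} {f : α → α} (hf : ∀ a ∈ G, f a ∈ G) {j : ℕ}
    {c : List α →₀ M} (hc : c ∈ listChains M G j) : prism f c ∈ listChains M G (j + 1) := by
  refine map_mem_of_mem_chainsOn _ ?_ hc
  rintro l ⟨rfl, hl⟩ m -
  rw [prism_single]
  clear hc
  induction l with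
  | nil => exact Submodule.zero_mem _
  | cons a l ih =>
    rw [List.forall_mem_cons] at hl
    refine Submodule.sub_mem _ (single_mem_chainsOn ?_ trivial)
      (consChain_mem_chainsOn (fun _ => cons_mem_listsIn hl.1) (ih hl.2))
    exact cons_mem_listsIn hl.1 (cons_mem_listsIn (hf a hl.1) (map_mem_listsIn hf ⟨rfl, hl.2⟩))

end Supported

section RelativeExactness

variable {C D Γ : Type*} [AddCommGroup C] [AddCommGroup D]

/-- Exactness at `q` of the complex of quotients `A (q + 1) / U (q + 1)` of submodules of a fixed
module, phrased without forming the quotients.  Degrees are shifted by one because chains are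
indexed by the length of the underlying lists. -/
def ExactModulo (d : C →ₗ[ℤ] C) (A U : ℕ → Submodule ℤ C) (q : ℕ) : Prop :=
  ∀ x ∈ A (q + 1), d x ∈ U q → ∃ y ∈ A (q + 2), x - d y ∈ U (q + 1)

/-- The chains that vanish in the quotient of the `G`-coinvariants of `A` by the image of `A'`. -/
def nullChains (ρ : Γ → C →ₗ[ℤ] C) (G : Set Γ) (A A' : Submodule ℤ C) : Submodule ℤ C :=
  Submodule.span ℤ {c | ∃ g ∈ G, ∃ x ∈ A, c = ρ g x - x} ⊔ A'

variable {ρ : Γ → C →ₗ[ℤ] C} {G : Set Γ} {A A' : Submodule ℤ C}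

lemma translate_sub_mem_nullChains {g : Γ} (hg : g ∈ G) {x : C} (hx : x ∈ A) :
    ρ g x - x ∈ nullChains ρ G A A' :=
  Submodule.mem_sup_left (Submodule.subset_span ⟨g, hg, x, hx, rfl⟩)

lemma mem_nullChains_of_mem {x : C} (hx : x ∈ A') : x ∈ nullChains ρ G A A' :=
  Submodule.mem_sup_right hx

lemma map_mem_of_mem_nullChains {K : Submodule ℤ D} (f : C →ₗ[ℤ] D)
    (hA : ∀ g ∈ G, ∀ x ∈ A, f (ρ g x) - f x ∈ K) (hA' : ∀ x ∈ A', f x ∈ K) {c : C}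
    (hc : c ∈ nullChains ρ G A A') : f c ∈ K := by
  have : nullChains ρ G A A' ≤ K.comap f := by
    refine sup_le (Submodule.span_le.2 ?_) hA'
    rintro _ ⟨g, hg, x, hx, rfl⟩
    simpa using hA g hg x hx
  exact this hc

/-- The relations of the relative coinvariant complex.  In length `0` everything is a relation,
which removes the augmentation term. -/
def nullFamily (ρ : Γ → C →ₗ[ℤ] C) (G : Set Γ) (A A' : ℕ → Submodule ℤ C) : ℕ → Submodule ℤ C
  | 0 => ⊤
  | j + 1 => nullChains ρ G (A (j + 1)) (A' (j + 1))

/-- A double complex `C` whose vertical differential `dG` and horizontal differential `dX`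
commute, with a bigraded family `A` of submodules and relations `U`. -/
structure IsDoubleComplex (dG dX : C →ₗ[ℤ] C) (A U : ℕ → ℕ → Submodule ℤ C) : Prop where
  comm (c : C) : dX (dG c) = dG (dX c)
  dG_dG (c : C) : dG (dG c) = 0
  dX_dX (c : C) : dX (dX c) = 0
  dG_mem {i j : ℕ} {c : C} : c ∈ A i (j + 1) → dG c ∈ A i j
  dX_mem {i j : ℕ} {c : C} : c ∈ A (i + 1) j → dX c ∈ A i j
  dG_mem_rel {i j : ℕ} {c : C} : c ∈ U i (j + 1) → dG c ∈ U i j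
  dX_mem_rel {i j : ℕ} {c : C} : c ∈ U (i + 1) j → dX c ∈ U i j
  rel_zero (i : ℕ) : U i 0 = ⊤

namespace IsDoubleComplex

variable {dG dX : C →ₗ[ℤ] C} {A U : ℕ → ℕ → Submodule ℤ C}

lemma exists_vertical_cycle (h : IsDoubleComplex dG dX A U) {k : ℕ}
    (rows : ∀ i j, i + j + 1 = k → ExactModulo dX (A · (j + 1)) (U · (j + 1)) i)
    (columns : ∀ i j, i + j + 1 = k → ExactModulo dG (A (i + 2)) (U (i + 2)) j) (j : ℕ) :
    ∀ i, i + j = k → ∀ x ∈ A (i + 1) (j + 1), dX (dG x) ∈ U i j →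
      ∃ y ∈ A (i + 2) (j + 1), dG (x - dX y) ∈ U (i + 1) j := by
  induction j with
  | zero => exact fun i _ x _ _ => ⟨0, Submodule.zero_mem _, h.rel_zero _ ▸ trivial⟩
  | succ j ih =>
    intro i hij x hx hdx
    obtain ⟨u, hu, hxu⟩ := rows i j (by lia) (dG x) (h.dG_mem hx) hdx
    have hdu : dX (dG u) ∈ U (i + 1) j := by
      have := h.dG_mem_rel hxu
      rw [map_sub, h.dG_dG, zero_sub, ← h.comm] at this
      simpa using Submodule.neg_mem _ this
    obtain ⟨v, hv, huv⟩ := ih (i + 1) (by lia) u hu hdu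
    obtain ⟨y, hy, huy⟩ := columns i j (by lia) (u - dX v)
      (Submodule.sub_mem _ hu (h.dX_mem hv)) huv
    refine ⟨y, hy, ?_⟩
    convert Submodule.add_mem _ hxu (h.dX_mem_rel huy) using 1
    simp only [map_sub, h.dX_dX, h.comm]
    abel

lemma exactModulo_column_zero (h : IsDoubleComplex dG dX A U) {k : ℕ}
    (augmentation : ∀ x ∈ A 0 (k + 1), ∃ y ∈ A 1 (k + 1), x - dX y ∈ U 0 (k + 1))
    (rows : ∀ i j, i + j + 1 = k → ExactModulo dX (A · (j + 1)) (U · (j + 1)) i)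
    (columns : ∀ i j, i + j + 1 = k → ExactModulo dG (A (i + 2)) (U (i + 2)) j)
    (edge : ∀ x ∈ A 1 (k + 1), dG x ∈ U 1 k → ∃ w ∈ A 0 (k + 2), dX x - dG w ∈ U 0 (k + 1)) :
    ExactModulo dG (A 0) (U 0) k := by
  intro z hz hdz
  obtain ⟨x, hx, hzx⟩ := augmentation z hz
  have hdx : dX (dG x) ∈ U 0 k := by
    convert Submodule.sub_mem _ hdz (h.dG_mem_rel hzx) using 1
    simp only [map_sub, h.comm]
    abel
  obtain ⟨y, hy, hxy⟩ := h.exists_vertical_cycle rows columns k 0 (zero_add k) x hx hdx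
  obtain ⟨w, hw, hxw⟩ := edge (x - dX y) (Submodule.sub_mem _ hx (h.dX_mem hy)) hxy
  refine ⟨w, hw, ?_⟩
  convert Submodule.add_mem _ hzx hxw using 1
  simp only [map_sub, h.dX_dX]
  abel

end IsDoubleComplex

end RelativeExactness

section GroupChains

open Finsupp

variable {Γ Ω M N : Type*} [AddCommGroup M] [AddCommGroup N]

/-- The boundary in the group direction of chains with values in the free module on `Ω`, i.e. the
vertical differential of the double complex when `Ω` consists of simplices. -/
noncomputable def groupBoundary : (Ω →₀ List Γ →₀ M) →ₗ[ℤ] (Ω →₀ List Γ →₀ M) :=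
  mapRange.linearMap boundary

@[simp]
lemma groupBoundary_single (s : Ω) (c : List Γ →₀ M) :
    groupBoundary (single s c) = single s (boundary c) := by
  simp [groupBoundary]

lemma groupBoundary_apply (c : Ω →₀ List Γ →₀ M) (s : Ω) :
    groupBoundary c s = boundary (c s) := by
  simp [groupBoundary]

lemma groupBoundary_groupBoundary (c : Ω →₀ List Γ →₀ M) :
    groupBoundary (groupBoundary c) = 0 := by
  ext1 s
  simp [groupBoundary_apply, boundary_boundary]

variable [Group Γ]

/-- The action of `g` on homogeneous chains. -/
noncomputable abbrev leftTranslate (g : Γ) : (List Γ →₀ M) →ₗ[ℤ] (List Γ →₀ M) :=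
  mapChain (g * ·)

/-- The relations defining the relative group homology of `G' ≤ G`: homogeneous chains of `G`,
up to left translation, modulo chains of `G'`. -/
noncomputable def groupNull (M : Type*) [AddCommGroup M] (G G' : Subgroup Γ) :
    ℕ → Submodule ℤ (List Γ →₀ M) :=
  nullFamily leftTranslate G (listChains M G) fun j => listChains M G' j

/-- The vanishing of `H_q(G, G'; M)` for subgroups `G' ≤ G` and trivial coefficients `M`, computed
with homogeneous chains. -/
def RelHomologyVanishes (M : Type*) [AddCommGroup M] (G G' : Subgroup Γ) (q : ℕ) : Prop :=
  ExactModulo boundary (listChains M (G : Set Γ)) (groupNull M G G') q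

/-- The vanishing of the map `H_q(H, H'; M) → H_q(G, G'; M)` induced by inclusions `H ≤ G` and
`H' ≤ G'`. -/
def RelHomologyMapVanishes (M : Type*) [AddCommGroup M] (H H' G G' : Subgroup Γ) (q : ℕ) : Prop :=
  ∀ x ∈ listChains M (H : Set Γ) (q + 1), boundary x ∈ groupNull M H H' q →
    ∃ y ∈ listChains M (G : Set Γ) (q + 2), x - boundary y ∈ groupNull M G G' (q + 1)

/-- Group chains of `G` with coefficients in the permutation module on `S`. -/
noncomputable abbrev orbitChains (M : Type*) [AddCommGroup M] (G : Subgroup Γ) (S : Set Ω)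
    (j : ℕ) : Submodule ℤ (Ω →₀ List Γ →₀ M) :=
  chainsOn S (listChains M (G : Set Γ) j)

lemma map_mem_of_mem_orbitChains {G : Subgroup Γ} {S : Set Ω} {j : ℕ} {K : Submodule ℤ N}
    (f : (Ω →₀ List Γ →₀ M) →ₗ[ℤ] N)
    (h : ∀ s ∈ S, ∀ l ∈ listsIn (G : Set Γ) j, ∀ m : M, f (single s (single l m)) ∈ K)
    {c : Ω →₀ List Γ →₀ M} (hc : c ∈ orbitChains M G S j) : f c ∈ K :=
  map_mem_of_mem_chainsOn f (fun s hs _ hc =>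
    map_mem_of_mem_chainsOn (f ∘ₗ lsingle s) (fun l hl m _ => h s hs l hl m) hc) hc

lemma groupBoundary_mem_orbitChains {G : Subgroup Γ} {S : Set Ω} {j : ℕ}
    {c : Ω →₀ List Γ →₀ M} (hc : c ∈ orbitChains M G S (j + 1)) :
    groupBoundary c ∈ orbitChains M G S j :=
  mapRange_mem_chainsOn (fun _ => boundary_mem_listChains) hc

variable [MulAction Γ Ω]

/-- The diagonal action of `g` on group chains with coefficients in the permutation module on
`Ω`. -/
noncomputable def diagTranslate (g : Γ) : (Ω →₀ List Γ →₀ M) →ₗ[ℤ] (Ω →₀ List Γ →₀ M) :=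
  lmapDomain _ ℤ (g • ·) ∘ₗ mapRange.linearMap (leftTranslate g)

/-- The relations defining the homology of the pair `(G, G')` with coefficients in the
permutation modules on the sets `S' ⊆ S`. -/
noncomputable def orbitNull (M : Type*) [AddCommGroup M] (G G' : Subgroup Γ) (S S' : Set Ω) :
    ℕ → Submodule ℤ (Ω →₀ List Γ →₀ M) :=
  nullFamily diagTranslate G (orbitChains M G S) (orbitChains M G' S')

@[simp]
lemma diagTranslate_single (g : Γ) (s : Ω) (c : List Γ →₀ M) :
    diagTranslate g (single s c) = single (g • s) (leftTranslate g c) := by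
  simp [diagTranslate]

variable {G G' : Subgroup Γ} {S S' : Set Ω} {j : ℕ}

lemma single_mem_orbitNull {s : Ω} (hs : s ∈ S') {c : List Γ →₀ M}
    (hc : c ∈ listChains M (G' : Set Γ) (j + 1)) :
    single s c ∈ orbitNull M G G' S S' (j + 1) :=
  mem_nullChains_of_mem (single_mem_chainsOn hs hc)

lemma single_translate_sub_mem_orbitNull {g : Γ} (hg : g ∈ G) {s : Ω} (hs : s ∈ S)
    {c : List Γ →₀ M} (hc : c ∈ listChains M (G : Set Γ) (j + 1)) :
    single (g • s) (leftTranslate g c) - single s c ∈ orbitNull M G G' S S' (j + 1) := by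
  rw [← diagTranslate_single]
  exact translate_sub_mem_nullChains hg (single_mem_chainsOn hs hc)

lemma map_mem_of_mem_orbitNull {K : Submodule ℤ N} (f : (Ω →₀ List Γ →₀ M) →ₗ[ℤ] N)
    (hG : ∀ g ∈ G, ∀ s ∈ S, ∀ c ∈ listChains M (G : Set Γ) (j + 1),
      f (single (g • s) (leftTranslate g c)) - f (single s c) ∈ K)
    (hG' : ∀ s ∈ S', ∀ c ∈ listChains M (G' : Set Γ) (j + 1), f (single s c) ∈ K)
    {c : Ω →₀ List Γ →₀ M} (hc : c ∈ orbitNull M G G' S S' (j + 1)) : f c ∈ K := by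
  refine map_mem_of_mem_nullChains f (fun g hg x hx => ?_)
    (fun x hx => map_mem_of_mem_chainsOn f hG' hx) hc
  refine map_mem_of_mem_chainsOn (f ∘ₗ diagTranslate g - f) (fun s hs c hc => ?_) hx
  simpa using hG g hg s hs c hc

lemma groupBoundary_mem_orbitNull {c : Ω →₀ List Γ →₀ M}
    (hc : c ∈ orbitNull M G G' S S' (j + 1)) : groupBoundary c ∈ orbitNull M G G' S S' j := by
  cases j with
  | zero => trivial
  | succ j =>
    refine map_mem_of_mem_orbitNull groupBoundary ?_ ?_ hc
    · intro g hg s hs c hc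
      rw [groupBoundary_single, groupBoundary_single, boundary_mapChain]
      exact single_translate_sub_mem_orbitNull hg hs (boundary_mem_listChains hc)
    · intro s hs c hc
      rw [groupBoundary_single]
      exact single_mem_orbitNull hs (boundary_mem_listChains hc)

lemma single_mem_orbitNull_of_mem_groupNull {H H' : Subgroup Γ} (hHG : H ≤ G) (hHG' : H' ≤ G')
    (hSS : S' ⊆ S) {s : Ω} (hs : s ∈ S') (hfix : ∀ h ∈ H, h • s = s) {c : List Γ →₀ M}
    (hc : c ∈ groupNull M H H' (j + 1)) : single s c ∈ orbitNull M G G' S S' (j + 1) := by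
  refine map_mem_of_mem_nullChains (lsingle s) (fun h hh x hx => ?_) (fun x hx => ?_) hc
  · have := single_translate_sub_mem_orbitNull (G' := G') (S' := S') (hHG hh) (hSS hs)
      (listChains_mono hHG _ hx)
    rwa [hfix h hh] at this
  · exact single_mem_orbitNull hs (listChains_mono hHG' _ hx)

end GroupChains

section Shapiro

open Finsupp

variable {Γ Ω M : Type*} [Group Γ] [MulAction Γ Ω] [AddCommGroup M]

/-- A choice of orbit representatives in `S'` for the action of `G` on `S`, together with group
elements moving every point to its representative; points of `S'` are moved by elements of `G'`. -/
structure OrbitSelection (G G' : Subgroup Γ) (S S' : Set Ω) where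
  rep : Ω → Ω
  move : Ω → Γ
  rep_mem {s : Ω} : s ∈ S → rep s ∈ S'
  rep_smul {g : Γ} (s : Ω) : g ∈ G → rep (g • s) = rep s
  move_mem {s : Ω} : s ∈ S → move s ∈ G
  move_mem' {s : Ω} : s ∈ S' → move s ∈ G'
  move_smul {s : Ω} : s ∈ S → move s • s = rep s

/-- Subsets `S' ⊆ S` stable under `G'` and `G` such that the inclusion induces a bijection
`S' / G' ≃ S / G` on orbits. -/
structure OrbitEquiv (G G' : Subgroup Γ) (S S' : Set Ω) : Prop where
  le : G' ≤ G
  subset : S' ⊆ S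
  smul_mem {g : Γ} (hg : g ∈ G) {s : Ω} (hs : s ∈ S) : g • s ∈ S
  smul_mem' {g : Γ} (hg : g ∈ G') {s : Ω} (hs : s ∈ S') : g • s ∈ S'
  surjective {s : Ω} (hs : s ∈ S) : ∃ g ∈ G, g • s ∈ S'
  injective {s : Ω} (hs : s ∈ S') {g : Γ} (hg : g ∈ G) (hgs : g • s ∈ S') :
    ∃ g' ∈ G', g' • s = g • s

variable {G G' : Subgroup Γ} {S S' : Set Ω} {j : ℕ}

lemma OrbitEquiv.exists_rep (h : OrbitEquiv G G' S S') :
    ∃ rep : Ω → Ω, (∀ s ∈ S, rep s ∈ S' ∧ ∃ g ∈ G, g • s = rep s) ∧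
      ∀ g ∈ G, ∀ s, rep (g • s) = rep s := by
  classical
  let orbit : Ω → MulAction.orbitRel.Quotient G Ω := Quotient.mk''
  have orbit_eq {s t : Ω} : orbit s = orbit t ↔ ∃ g ∈ G, g • t = s := by
    rw [Quotient.eq'']
    exact ⟨fun ⟨g, hg⟩ => ⟨g, g.2, hg⟩, fun ⟨g, hg, h⟩ => ⟨⟨g, hg⟩, h⟩⟩
  let out (o : MulAction.orbitRel.Quotient G Ω) : Ω :=
    if h : ∃ t ∈ S', orbit t = o then h.choose else o.out
  refine ⟨fun s => out (orbit s), fun s hs => ?_, fun g hg s => ?_⟩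
  · obtain ⟨g, hg, hgs⟩ := h.surjective hs
    have hex : ∃ t ∈ S', orbit t = orbit s := ⟨_, hgs, orbit_eq.2 ⟨g, hg, rfl⟩⟩
    have hout : out (orbit s) = hex.choose := dif_pos hex
    dsimp only
    rw [hout]
    exact ⟨hex.choose_spec.1, orbit_eq.1 hex.choose_spec.2⟩
  · exact congrArg out (orbit_eq.2 ⟨g, hg, rfl⟩)

lemma OrbitEquiv.nonempty_orbitSelection (h : OrbitEquiv G G' S S') :
    Nonempty (OrbitSelection G G' S S') := by
  obtain ⟨rep, rep_spec, rep_smul⟩ := h.exists_rep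
  have exists_move (s : Ω) :
      ∃ g : Γ, (s ∈ S → g ∈ G ∧ g • s = rep s) ∧ (s ∈ S' → g ∈ G') := by
    by_cases hs' : s ∈ S'
    · obtain ⟨hrep, g, hg, hgs⟩ := rep_spec s (h.subset hs')
      obtain ⟨g', hg', hgg'⟩ := h.injective hs' hg (hgs ▸ hrep)
      exact ⟨g', fun _ => ⟨h.le hg', hgg'.trans hgs⟩, fun _ => hg'⟩
    · by_cases hs : s ∈ S
      · obtain ⟨-, g, hg, hgs⟩ := rep_spec s hs
        exact ⟨g, fun _ => ⟨hg, hgs⟩, fun h => absurd h hs'⟩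
      · exact ⟨1, fun h => absurd h hs, fun h => absurd h hs'⟩
  choose move move_spec move_mem' using exists_move
  exact ⟨⟨rep, move, fun hs => (rep_spec _ hs).1, fun s hg => rep_smul _ hg s,
    fun hs => (move_spec _ hs).1, fun hs => move_mem' _ hs, fun hs => (move_spec _ hs).2⟩⟩

namespace OrbitSelection

variable (σ : OrbitSelection G G' S S') {s : Ω}

/-- The `G`-equivariant retraction of the vertex `a` over `s` onto a vertex carrying the
representative of the orbit of `s` to `s`. -/
def straighten (s : Ω) (a : Γ) : Γ :=
  a * (σ.move (a⁻¹ • s))⁻¹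

/-- The vertex `straighten s a` translated so as to lie over the representative of `s`. -/
def normalize (s : Ω) (a : Γ) : Γ :=
  σ.move s * σ.straighten s a

lemma straighten_smul (s : Ω) (g a : Γ) :
    σ.straighten (g • s) (g * a) = g * σ.straighten s a := by
  simp only [straighten, mul_inv_rev, mul_smul, inv_smul_smul, mul_assoc]

lemma straighten_mem (h : OrbitEquiv G G' S S') (hs : s ∈ S) {a : Γ} (ha : a ∈ G) :
    σ.straighten s a ∈ G :=
  G.mul_mem ha (G.inv_mem (σ.move_mem (h.smul_mem (G.inv_mem ha) hs)))

lemma straighten_mem' (h : OrbitEquiv G G' S S') (hs : s ∈ S') {a : Γ} (ha : a ∈ G') :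
    σ.straighten s a ∈ G' :=
  G'.mul_mem ha (G'.inv_mem (σ.move_mem' (h.smul_mem' (G'.inv_mem ha) hs)))

lemma normalize_smul_rep (h : OrbitEquiv G G' S S') (hs : s ∈ S) {a : Γ} (ha : a ∈ G) :
    σ.normalize s a • σ.rep s = σ.rep s := by
  have hmove : σ.move (a⁻¹ • s) • a⁻¹ • s = σ.rep s :=
    (σ.move_smul (h.smul_mem (G.inv_mem ha) hs)).trans (σ.rep_smul s (G.inv_mem ha))
  rw [normalize, straighten, mul_smul, mul_smul]
  nth_rw 1 [← hmove]
  rw [inv_smul_smul, smul_inv_smul, σ.move_smul hs]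

lemma normalize_mem (h : OrbitEquiv G G' S S') (hs : s ∈ S) {a : Γ} (ha : a ∈ G) :
    σ.normalize s a ∈ G ⊓ MulAction.stabilizer Γ (σ.rep s) :=
  ⟨G.mul_mem (σ.move_mem hs) (σ.straighten_mem h hs ha), σ.normalize_smul_rep h hs ha⟩

lemma normalize_mem' (h : OrbitEquiv G G' S S') (hs : s ∈ S') {a : Γ} (ha : a ∈ G') :
    σ.normalize s a ∈ G' ⊓ MulAction.stabilizer Γ (σ.rep s) :=
  ⟨G'.mul_mem (σ.move_mem' hs) (σ.straighten_mem' h hs ha),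
    σ.normalize_smul_rep h (h.subset hs) (h.le ha)⟩

/-- The transition element between the normalizations over `s` and over `g • s`. -/
def cocycle (g : Γ) (s : Ω) : Γ :=
  σ.move (g • s) * g * (σ.move s)⁻¹

lemma cocycle_mem (h : OrbitEquiv G G' S S') {g : Γ} (hg : g ∈ G) (hs : s ∈ S) :
    σ.cocycle g s ∈ G ⊓ MulAction.stabilizer Γ (σ.rep s) := by
  refine ⟨G.mul_mem (G.mul_mem (σ.move_mem (h.smul_mem hg hs)) hg) (G.inv_mem (σ.move_mem hs)), ?_⟩
  change σ.cocycle g s • σ.rep s = σ.rep s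
  rw [cocycle, mul_smul, mul_smul]
  nth_rw 1 [← σ.move_smul hs]
  rw [inv_smul_smul, σ.move_smul (h.smul_mem hg hs), σ.rep_smul s hg]

lemma normalize_smul (g : Γ) (s : Ω) (a : Γ) :
    σ.normalize (g • s) (g * a) = σ.cocycle g s * σ.normalize s a := by
  simp only [normalize, cocycle, straighten_smul]
  group

/-- Concentrates a chain on the orbit representatives. -/
noncomputable def concentrate : (Ω →₀ List Γ →₀ M) →ₗ[ℤ] (Ω →₀ List Γ →₀ M) :=
  Finsupp.lsum ℤ fun s => lsingle (σ.rep s) ∘ₗ mapChain (σ.normalize s)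

/-- The chain homotopy comparing the identity with the retraction `straighten`. -/
noncomputable def homotopy : (Ω →₀ List Γ →₀ M) →ₗ[ℤ] (Ω →₀ List Γ →₀ M) :=
  Finsupp.lsum ℤ fun s => lsingle s ∘ₗ prism (σ.straighten s)

@[simp]
lemma concentrate_single (s : Ω) (c : List Γ →₀ M) :
    σ.concentrate (single s c) = single (σ.rep s) (mapChain (σ.normalize s) c) := by
  simp [concentrate]

@[simp]
lemma homotopy_single (s : Ω) (c : List Γ →₀ M) :
    σ.homotopy (single s c) = single s (prism (σ.straighten s) c) := by
  simp [homotopy]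

lemma groupBoundary_concentrate (c : Ω →₀ List Γ →₀ M) :
    groupBoundary (σ.concentrate c) = σ.concentrate (groupBoundary c) := by
  induction c using Finsupp.induction_linear with
  | zero => simp
  | add c c' hc hc' => simp only [map_add, hc, hc']
  | single s c => simp [boundary_mapChain]

lemma homotopy_mem_orbitChains (h : OrbitEquiv G G' S S') {c : Ω →₀ List Γ →₀ M}
    (hc : c ∈ orbitChains M G S j) : σ.homotopy c ∈ orbitChains M G S (j + 1) := by
  refine map_mem_of_mem_chainsOn _ (fun s hs c hc => ?_) hc
  rw [homotopy_single]
  exact single_mem_chainsOn hs (prism_mem_listChains (fun _ => σ.straighten_mem h hs) hc)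

lemma homotopy_mem_orbitNull (h : OrbitEquiv G G' S S') {c : Ω →₀ List Γ →₀ M}
    (hc : c ∈ orbitNull M G G' S S' (j + 1)) :
    σ.homotopy c ∈ orbitNull M G G' S S' (j + 2) := by
  refine map_mem_of_mem_orbitNull _ (fun g hg s hs c hc => ?_) (fun s hs c hc => ?_) hc
  · rw [homotopy_single, homotopy_single,
      ← mapChain_prism (f := σ.straighten s) (σ.straighten_smul s g)]
    exact single_translate_sub_mem_orbitNull hg hs
      (prism_mem_listChains (fun _ => σ.straighten_mem h hs) hc)
  · rw [homotopy_single]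
    exact single_mem_orbitNull hs (prism_mem_listChains (fun _ => σ.straighten_mem' h hs) hc)

lemma concentrate_sub_mem_orbitNull (h : OrbitEquiv G G' S S') {x : Ω →₀ List Γ →₀ M}
    (hx : x ∈ orbitChains M G S (j + 1)) :
    σ.concentrate x - (groupBoundary (σ.homotopy x) + σ.homotopy (groupBoundary x) + x) ∈
      orbitNull M G G' S S' (j + 1) := by
  refine map_mem_of_mem_chainsOn (σ.concentrate - (groupBoundary ∘ₗ σ.homotopy +
    σ.homotopy ∘ₗ groupBoundary + LinearMap.id)) (fun s hs c hc => ?_) hx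
  have straighten_eq : groupBoundary (σ.homotopy (single s c)) +
      σ.homotopy (groupBoundary (single s c)) + single s c =
        single s (mapChain (σ.straighten s) c) := by
    simp only [homotopy_single, groupBoundary_single, ← single_add, boundary_prism_add,
      sub_add_cancel]
  have normalize_eq : mapChain (σ.normalize s) c =
      leftTranslate (σ.move s) (mapChain (σ.straighten s) c) := by
    rw [mapChain_mapChain]
    rfl
  simp only [LinearMap.sub_apply, LinearMap.add_apply, LinearMap.comp_apply, LinearMap.id_apply,
    straighten_eq, concentrate_single, normalize_eq, ← σ.move_smul hs]
  exact single_translate_sub_mem_orbitNull (σ.move_mem hs) hs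
    (mapChain_mem_listChains (fun _ => σ.straighten_mem h hs) hc)

lemma concentrate_mem_orbitChains (h : OrbitEquiv G G' S S') {x : Ω →₀ List Γ →₀ M}
    (hx : x ∈ orbitChains M G S j) :
    σ.concentrate x ∈ orbitChains M G S' j := by
  refine map_mem_of_mem_chainsOn _ (fun s hs c hc => ?_) hx
  rw [concentrate_single]
  exact single_mem_chainsOn (σ.rep_mem hs)
    (mapChain_mem_listChains (fun _ ha => (σ.normalize_mem h hs ha).1) hc)

lemma concentrate_apply_mem_listChains (h : OrbitEquiv G G' S S') {x : Ω →₀ List Γ →₀ M}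
    (hx : x ∈ orbitChains M G S j) (r : Ω) :
    σ.concentrate x r ∈ listChains M (G ⊓ MulAction.stabilizer Γ r : Subgroup Γ) j := by
  classical
  refine map_mem_of_mem_chainsOn (lapply r ∘ₗ σ.concentrate) (fun s hs c hc => ?_) hx
  rw [LinearMap.comp_apply, concentrate_single, lapply_apply, single_apply]
  split_ifs with hr
  · subst hr
    exact mapChain_mem_listChains (fun _ => σ.normalize_mem h hs) hc
  · exact Submodule.zero_mem _

lemma concentrate_apply_mem_groupNull (h : OrbitEquiv G G' S S') {x : Ω →₀ List Γ →₀ M}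
    (hx : x ∈ orbitNull M G G' S S' (j + 1)) (r : Ω) :
    σ.concentrate x r ∈ groupNull M (G ⊓ MulAction.stabilizer Γ r)
      (G' ⊓ MulAction.stabilizer Γ r) (j + 1) := by
  classical
  refine map_mem_of_mem_orbitNull (lapply r ∘ₗ σ.concentrate) (fun g hg s hs c hc => ?_)
    (fun s hs c hc => ?_) hx
  · simp only [LinearMap.comp_apply, concentrate_single, lapply_apply, σ.rep_smul s hg,
      single_apply]
    split_ifs with hr
    · subst hr
      have translate_eq : mapChain (σ.normalize (g • s)) (leftTranslate g c) =
          leftTranslate (σ.cocycle g s) (mapChain (σ.normalize s) c) := by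
        simp only [mapChain_mapChain, σ.normalize_smul]
      rw [translate_eq]
      exact translate_sub_mem_nullChains (σ.cocycle_mem h hg hs)
        (mapChain_mem_listChains (fun _ => σ.normalize_mem h hs) hc)
    · simp
  · simp only [LinearMap.comp_apply, concentrate_single, lapply_apply, single_apply]
    split_ifs with hr
    · subst hr
      exact mem_nullChains_of_mem
        (mapChain_mem_listChains (fun _ => σ.normalize_mem' h hs) hc)
    · exact Submodule.zero_mem _

end OrbitSelection

theorem OrbitEquiv.exists_concentrated (h : OrbitEquiv G G' S S') {x : Ω →₀ List Γ →₀ M}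
    (hx : x ∈ orbitChains M G S (j + 2))
    (hdx : groupBoundary x ∈ orbitNull M G G' S S' (j + 1)) :
    ∃ w ∈ orbitChains M G S (j + 3), ∃ y ∈ orbitChains M G S' (j + 2),
      (∀ r, y r ∈ listChains M (G ⊓ MulAction.stabilizer Γ r : Subgroup Γ) (j + 2)) ∧
      (∀ r, boundary (y r) ∈ groupNull M (G ⊓ MulAction.stabilizer Γ r)
        (G' ⊓ MulAction.stabilizer Γ r) (j + 1)) ∧
      x - groupBoundary w - y ∈ orbitNull M G G' S S' (j + 2) := by
  obtain ⟨σ⟩ := h.nonempty_orbitSelection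
  refine ⟨-σ.homotopy x, Submodule.neg_mem _ (σ.homotopy_mem_orbitChains h hx), σ.concentrate x,
    σ.concentrate_mem_orbitChains h hx, σ.concentrate_apply_mem_listChains h hx, fun r => ?_, ?_⟩
  · rw [← groupBoundary_apply, σ.groupBoundary_concentrate]
    exact σ.concentrate_apply_mem_groupNull h hdx r
  · convert Submodule.neg_mem _ (Submodule.add_mem _ (σ.concentrate_sub_mem_orbitNull h hx)
      (σ.homotopy_mem_orbitNull h hdx)) using 1
    rw [map_neg]
    abel

/-- A relative form of Shapiro's lemma. -/
theorem OrbitEquiv.exactModulo (h : OrbitEquiv G G' S S')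
    (stabilizers : ∀ r ∈ S', RelHomologyVanishes M (G ⊓ MulAction.stabilizer Γ r)
      (G' ⊓ MulAction.stabilizer Γ r) (j + 1)) :
    ExactModulo groupBoundary (orbitChains M G S) (orbitNull M G G' S S') (j + 1) := by
  intro x hx hdx
  obtain ⟨w, hw, y, hy, y_mem, boundary_y, hxy⟩ := h.exists_concentrated hx hdx
  have hyS' {r : Ω} (hr : r ∈ y.support) : r ∈ S' := mem_of_mem_support_chainsOn hy hr
  choose! v hv hyv using fun r (hr : r ∈ S') => stabilizers r hr (y r) (y_mem r) (boundary_y r)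
  refine ⟨w + ∑ r ∈ y.support, single r (v r), Submodule.add_mem _ hw
    (Submodule.sum_mem _ fun r hr => single_mem_chainsOn (h.subset (hyS' hr))
      (listChains_mono (fun _ ha => ha.1) _ (hv r (hyS' hr)))), ?_⟩
  have fillings : y - ∑ r ∈ y.support, single r (boundary (v r)) ∈
      orbitNull M G G' S S' (j + 2) := by
    nth_rw 1 [← y.sum_single]
    rw [Finsupp.sum, ← Finset.sum_sub_distrib]
    refine Submodule.sum_mem _ fun r hr => ?_
    rw [← single_sub]
    exact single_mem_orbitNull_of_mem_groupNull inf_le_left inf_le_left h.subset (hyS' hr)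
      (fun _ ha => MulAction.mem_stabilizer_iff.1 (Subgroup.mem_inf.1 ha).2) (hyv r (hyS' hr))
  convert Submodule.add_mem _ hxy fillings using 1
  simp only [map_add, map_sum, groupBoundary_single]
  abel

lemma exactModulo_groupBoundary_zero (smul_mem : ∀ g ∈ G, ∀ s ∈ S, g • s ∈ S)
    (surjective : ∀ s ∈ S, ∃ g ∈ G, g • s ∈ S') :
    ExactModulo groupBoundary (orbitChains M G S) (orbitNull M G G' S S') 0 := by
  let E := (orbitChains M G S 2).map groupBoundary ⊔ orbitNull M G G' S S' 1
  suffices ∀ s ∈ S, ∀ a ∈ G, ∀ m : M, single s (single [a] m) ∈ E by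
    intro x hx _
    have hxE : x ∈ E := by
      refine map_mem_of_mem_orbitChains LinearMap.id (fun s hs l hl m => ?_) hx
      obtain ⟨a, rfl⟩ := List.length_eq_one_iff.1 hl.1
      exact this s hs a (hl.2 a List.mem_cons_self) m
    obtain ⟨_, ⟨y, hy, rfl⟩, u, hu, rfl⟩ := Submodule.mem_sup.1 hxE
    exact ⟨y, hy, by simpa using hu⟩
  intro s hs a ha m
  obtain ⟨g, hg, hgs⟩ := surjective s hs
  have path : groupBoundary (single (g • s) (single [g * a, 1] m)) ∈
      (orbitChains M G S 2).map groupBoundary :=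
    Submodule.mem_map_of_mem (single_mem_chainsOn (smul_mem g hg s hs)
      (single_mem_chainsOn ⟨rfl, by simp [G.mul_mem hg ha]⟩ trivial))
  have endpoint : single (g • s) (single [1] m) ∈ orbitNull M G G' S S' 1 :=
    single_mem_orbitNull hgs (single_mem_chainsOn ⟨rfl, by simp⟩ trivial)
  have translate : single (g • s) (single [g * a] m) - single s (single [a] m) ∈
      orbitNull M G G' S S' 1 := by
    simpa using single_translate_sub_mem_orbitNull (G' := G') (S' := S') hg hs
      (single_mem_chainsOn (L := ⊤) (s := [a]) (m := m) ⟨rfl, by simpa using ha⟩ trivial)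
  convert Submodule.sub_mem _ (Submodule.mem_sup_right (Submodule.sub_mem _ endpoint translate))
    (Submodule.mem_sup_left path) using 1
  simp only [groupBoundary_single, boundary_single, faces, LinearMap.sub_apply,
    LinearMap.comp_apply, lsingle_apply, consChain_single, LinearMap.zero_apply, map_zero,
    sub_zero, single_sub]
  abel

end Shapiro

section SimplexChains

open Finsupp

variable {Γ P M : Type*} [AddCommGroup M]

lemma boundary_groupBoundary (c : List P →₀ List Γ →₀ M) :
    boundary (groupBoundary c) = groupBoundary (boundary c) :=
  boundary_mapRange boundary c

/-- Every finite subset of `S` is coned off inside `T` by a single vertex. -/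
def HasCones (S T : Set (List P)) : Prop :=
  ∀ F : Finset (List P), (F : Set (List P)) ⊆ S → ∃ p, ∀ s ∈ F, p :: s ∈ T

lemma HasCones.exists_boundary_eq {S T : Set (List P)} (h : HasCones S T) {L : Submodule ℤ M}
    {x : List P →₀ M} (hx : x ∈ chainsOn S L) (hdx : boundary x = 0) :
    ∃ y ∈ chainsOn T L, boundary y = x := by
  obtain ⟨p, hp⟩ := h x.support hx.1
  refine ⟨consChain p x, consChain_mem_chainsOn (S := x.support) hp
    ⟨(mem_supported _ _).2 subset_rfl, hx.2⟩, ?_⟩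
  rw [boundary_consChain, hdx, map_zero, sub_zero]

variable [Group Γ] [MulAction Γ P]

instance : MulAction Γ (List P) where
  smul g l := l.map (g • ·)
  one_smul l := by
    change l.map _ = l
    simp
  mul_smul g h l := by
    change l.map _ = (l.map _).map _
    simp [mul_smul, Function.comp_def]

lemma smul_list_def (g : Γ) (l : List P) : g • l = l.map (g • ·) := rfl

lemma boundary_diagTranslate (g : Γ) (c : List P →₀ List Γ →₀ M) :
    boundary (diagTranslate g c) = diagTranslate g (boundary c) :=
  (boundary_mapChain (g • ·) _).trans
    (congrArg (mapChain (g • ·)) (boundary_mapRange (leftTranslate g) c))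

/-- Translates every basis element so that its group vertices start with `1`.  This splits off
the coinvariants without disturbing the simplicial direction. -/
noncomputable def normalizeHead : (List P →₀ List Γ →₀ M) →ₗ[ℤ] (List P →₀ List Γ →₀ M) :=
  Finsupp.lsum ℤ fun s => Finsupp.lsum ℤ fun l =>
    diagTranslate (l.headD 1)⁻¹ ∘ₗ lsingle s ∘ₗ lsingle l

lemma normalizeHead_single (s : List P) (l : List Γ) (m : M) :
    normalizeHead (single s (single l m)) =
      diagTranslate (l.headD 1)⁻¹ (single s (single l m)) := by
  rw [normalizeHead, Finsupp.lsum_single, Finsupp.lsum_single]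
  rfl

lemma boundary_normalizeHead (c : List P →₀ List Γ →₀ M) :
    boundary (normalizeHead c) = normalizeHead (boundary c) := by
  suffices (boundary ∘ₗ normalizeHead : (List P →₀ List Γ →₀ M) →ₗ[ℤ] _) =
      normalizeHead ∘ₗ boundary from LinearMap.congr_fun this c
  refine Finsupp.lhom_ext' fun s => Finsupp.lhom_ext fun l m => ?_
  have normalizeHead_mapRange (c : List P →₀ M) :
      normalizeHead (mapRange.linearMap (lsingle l : M →ₗ[ℤ] List Γ →₀ M) c) =
        diagTranslate (l.headD 1)⁻¹
          (mapRange.linearMap (lsingle l : M →ₗ[ℤ] List Γ →₀ M) c) := by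
    induction c using Finsupp.induction_linear with
    | zero => simp
    | add c c' hc hc' => simp only [map_add, hc, hc']
    | single s m => simpa using normalizeHead_single s l m
  have boundary_single_single : boundary (single s (single l m)) =
      mapRange.linearMap (lsingle l : M →ₗ[ℤ] List Γ →₀ M) (boundary (single s m)) := by
    rw [← boundary_mapRange, mapRange.linearMap_apply, mapRange_single, lsingle_apply]
  simp only [LinearMap.comp_apply, lsingle_apply]
  rw [normalizeHead_single, boundary_diagTranslate, boundary_single_single, normalizeHead_mapRange]

lemma normalizeHead_diagTranslate_single (g : Γ) (s : List P) {l : List Γ} (hl : l ≠ []) (m : M) :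
    normalizeHead (diagTranslate g (single s (single l m))) =
      normalizeHead (single s (single l m)) := by
  obtain ⟨a, l, rfl⟩ := List.exists_cons_of_ne_nil hl
  rw [diagTranslate_single, mapChain_single, normalizeHead_single, normalizeHead_single]
  simp [mul_smul, mul_assoc, Function.comp_def]

variable {G G' : Subgroup Γ} {S S' T T' U : Set (List P)} {j : ℕ}

lemma boundary_mem_orbitNull (hST : ∀ s ∈ S, ∀ i < s.length, s.eraseIdx i ∈ T)
    (hST' : ∀ s ∈ S', ∀ i < s.length, s.eraseIdx i ∈ T') {x : List P →₀ List Γ →₀ M}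
    (hx : x ∈ orbitNull M G G' S S' j) : boundary x ∈ orbitNull M G G' T T' j := by
  cases j with
  | zero => trivial
  | succ j =>
    refine map_mem_of_mem_nullChains boundary (fun g hg x hx => ?_) (fun x hx => ?_) hx
    · rw [boundary_diagTranslate]
      exact translate_sub_mem_nullChains hg (boundary_mem_chainsOn hST hx)
    · exact mem_nullChains_of_mem (boundary_mem_chainsOn hST' hx)

lemma normalizeHead_mem_orbitChains (smul_mem : ∀ g ∈ G, ∀ s ∈ S, g • s ∈ S)
    {x : List P →₀ List Γ →₀ M} (hx : x ∈ orbitChains M G S (j + 1)) :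
    normalizeHead x ∈ orbitChains M G S (j + 1) := by
  refine map_mem_of_mem_orbitChains _ (fun s hs l hl m => ?_) hx
  obtain ⟨a, l, rfl⟩ := List.exists_cons_of_length_eq_add_one hl.1
  have ha : a⁻¹ ∈ G := G.inv_mem (hl.2 a List.mem_cons_self)
  rw [normalizeHead_single, diagTranslate_single]
  exact single_mem_chainsOn (smul_mem _ ha s hs)
    (mapChain_mem_listChains (fun _ hb => G.mul_mem ha hb) (single_mem_chainsOn hl trivial))

lemma normalizeHead_sub_mem_orbitNull {x : List P →₀ List Γ →₀ M}
    (hx : x ∈ orbitChains M G S (j + 1)) :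
    normalizeHead x - x ∈ orbitNull M G G' S S' (j + 1) := by
  refine map_mem_of_mem_orbitChains (normalizeHead - LinearMap.id) (fun s hs l hl m => ?_) hx
  obtain ⟨a, l, rfl⟩ := List.exists_cons_of_length_eq_add_one hl.1
  rw [LinearMap.sub_apply, normalizeHead_single]
  exact translate_sub_mem_nullChains (G.inv_mem (hl.2 a List.mem_cons_self))
    (single_mem_chainsOn hs (single_mem_chainsOn hl trivial))

lemma normalizeHead_mem_of_mem_orbitNull (smul_mem' : ∀ g ∈ G', ∀ s ∈ S', g • s ∈ S')
    {x : List P →₀ List Γ →₀ M} (hx : x ∈ orbitNull M G G' S S' (j + 1)) :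
    normalizeHead x ∈ orbitChains M G' S' (j + 1) := by
  refine map_mem_of_mem_nullChains _ (fun g _ x hx => ?_)
    (fun x hx => normalizeHead_mem_orbitChains smul_mem' hx) hx
  refine map_mem_of_mem_orbitChains (normalizeHead ∘ₗ diagTranslate g - normalizeHead)
    (fun s _ l hl m => ?_) hx
  rw [LinearMap.sub_apply, LinearMap.comp_apply, normalizeHead_diagTranslate_single g s
    (List.ne_nil_of_length_eq_add_one hl.1), sub_self]
  exact Submodule.zero_mem _

lemma exists_sub_boundary_mem_orbitNull (hGG : G' ≤ G) (hSS : S' ⊆ S)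
    (smul_mem : ∀ g ∈ G, ∀ s ∈ S, g • s ∈ S) (smul_mem' : ∀ g ∈ G', ∀ s ∈ T', g • s ∈ T')
    (cones : HasCones S U) (cones' : HasCones T' S') {x : List P →₀ List Γ →₀ M}
    (hx : x ∈ orbitChains M G S (j + 1)) (hdx : boundary x ∈ orbitNull M G G' T T' (j + 1)) :
    ∃ y ∈ orbitChains M G U (j + 1), x - boundary y ∈ orbitNull M G G' S S' (j + 1) := by
  obtain ⟨z, hz, hzx⟩ := cones'.exists_boundary_eq
    (normalizeHead_mem_of_mem_orbitNull smul_mem' hdx)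
    (by rw [boundary_normalizeHead, boundary_boundary, map_zero])
  obtain ⟨y, hy, hyx⟩ := cones.exists_boundary_eq
    (Submodule.sub_mem _ (normalizeHead_mem_orbitChains smul_mem hx)
      (chainsOn_mono hSS (listChains_mono hGG _) hz))
    (by rw [map_sub, boundary_normalizeHead, hzx, sub_self])
  refine ⟨y, hy, ?_⟩
  have hz_null : z ∈ orbitNull M G G' S S' (j + 1) := mem_nullChains_of_mem hz
  convert Submodule.sub_mem _ hz_null (normalizeHead_sub_mem_orbitNull hx) using 1
  rw [hyx]
  abel

/-- Families `S' i ⊆ S i` of simplices on `i` vertices, stable under `G'` and `G` and under taking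
faces, where `S' 0` contains the empty simplex. -/
structure IsSimplicialPair (G G' : Subgroup Γ) (S S' : ℕ → Set (List P)) : Prop where
  le : G' ≤ G
  subset (i : ℕ) : S' i ⊆ S i
  smul_mem (i : ℕ) : ∀ g ∈ G, ∀ s ∈ S i, g • s ∈ S i
  smul_mem' (i : ℕ) : ∀ g ∈ G', ∀ s ∈ S' i, g • s ∈ S' i
  length_eq (i : ℕ) : ∀ s ∈ S i, s.length = i
  nil_mem : [] ∈ S' 0
  eraseIdx_mem (i : ℕ) : ∀ s ∈ S (i + 1), ∀ j < s.length, s.eraseIdx j ∈ S i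
  eraseIdx_mem' (i : ℕ) : ∀ s ∈ S' (i + 1), ∀ j < s.length, s.eraseIdx j ∈ S' i

namespace IsSimplicialPair

variable {S S' : ℕ → Set (List P)} {k : ℕ}

lemma isDoubleComplex (h : IsSimplicialPair G G' S S') :
    IsDoubleComplex groupBoundary boundary (fun i => orbitChains M G (S i))
      (fun i => orbitNull M G G' (S i) (S' i)) where
  comm := boundary_groupBoundary
  dG_dG := groupBoundary_groupBoundary
  dX_dX := boundary_boundary
  dG_mem := groupBoundary_mem_orbitChains
  dX_mem := boundary_mem_chainsOn (h.eraseIdx_mem _)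
  dG_mem_rel := groupBoundary_mem_orbitNull
  dX_mem_rel := boundary_mem_orbitNull (h.eraseIdx_mem _) (h.eraseIdx_mem' _)
  rel_zero _ := rfl

lemma eq_nil (h : IsSimplicialPair G G' S S') {s : List P} (hs : s ∈ S 0) : s = [] :=
  List.length_eq_zero_iff.1 (h.length_eq 0 s hs)

lemma orbitEquiv (h : IsSimplicialPair G G' S S') {i : ℕ}
    (surjective : ∀ s ∈ S i, ∃ g ∈ G, g • s ∈ S' i)
    (injective : ∀ s ∈ S' i, ∀ g ∈ G, g • s ∈ S' i → ∃ g' ∈ G', g' • s = g • s) :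
    OrbitEquiv G G' (S i) (S' i) where
  le := h.le
  subset := h.subset i
  smul_mem {_} hg {_} hs := h.smul_mem i _ hg _ hs
  smul_mem' {_} hg {_} hs := h.smul_mem' i _ hg _ hs
  surjective {_} hs := surjective _ hs
  injective {_} hs _ hg hgs := injective _ hs _ hg hgs

lemma augmentation (h : IsSimplicialPair G G' S S') (cones : HasCones (S 0) (S 1))
    {x : List P →₀ List Γ →₀ M} (hx : x ∈ orbitChains M G (S 0) (k + 1)) :
    ∃ y ∈ orbitChains M G (S 1) (k + 1),
      x - boundary y ∈ orbitNull M G G' (S 0) (S' 0) (k + 1) := by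
  have hdx : boundary x = 0 := by
    refine map_mem_of_mem_chainsOn (K := ⊥) boundary (fun s hs c _ => ?_) hx
    obtain rfl := h.eq_nil hs
    simp [faces]
  obtain ⟨y, hy, rfl⟩ := cones.exists_boundary_eq hx hdx
  exact ⟨y, hy, by simp⟩

lemma boundary_eq_sum (h : IsSimplicialPair G G' S S') {y : List P →₀ List Γ →₀ M}
    (hy : ∀ r ∈ y.support, r ∈ S 1) : boundary y = ∑ r ∈ y.support, single [] (y r) := by
  conv_lhs => rw [← y.sum_single, Finsupp.sum, map_sum]
  refine Finset.sum_congr rfl fun r hr => ?_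
  obtain ⟨p, rfl⟩ := List.length_eq_one_iff.1 (h.length_eq 1 r (hy r hr))
  simp [faces]

lemma edge (h : IsSimplicialPair G G' S S') (vertices : OrbitEquiv G G' (S 1) (S' 1))
    (stabilizers : ∀ r ∈ S' 1, RelHomologyMapVanishes M (G ⊓ MulAction.stabilizer Γ r)
      (G' ⊓ MulAction.stabilizer Γ r) G G' (k + 1))
    {x : List P →₀ List Γ →₀ M} (hx : x ∈ orbitChains M G (S 1) (k + 2))
    (hdx : groupBoundary x ∈ orbitNull M G G' (S 1) (S' 1) (k + 1)) :
    ∃ w ∈ orbitChains M G (S 0) (k + 3),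
      boundary x - groupBoundary w ∈ orbitNull M G G' (S 0) (S' 0) (k + 2) := by
  obtain ⟨w, hw, y, hy, y_mem, boundary_y, hxy⟩ := vertices.exists_concentrated hx hdx
  have hyS' {r : List P} (hr : r ∈ y.support) : r ∈ S' 1 := mem_of_mem_support_chainsOn hy hr
  choose! v hv hyv using fun r (hr : r ∈ S' 1) =>
    stabilizers r hr (y r) (y_mem r) (boundary_y r)
  refine ⟨boundary w + ∑ r ∈ y.support, single [] (v r), Submodule.add_mem _
    (boundary_mem_chainsOn (h.eraseIdx_mem 0) hw) (Submodule.sum_mem _ fun r hr =>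
      single_mem_chainsOn (h.subset 0 h.nil_mem) (hv r (hyS' hr))), ?_⟩
  have fillings : ∑ r ∈ y.support, single [] (y r - boundary (v r)) ∈
      orbitNull M G G' (S 0) (S' 0) (k + 2) := by
    refine Submodule.sum_mem _ fun r hr => ?_
    exact single_mem_orbitNull_of_mem_groupNull le_rfl le_rfl
      (h.subset 0) h.nil_mem (fun _ _ => rfl) (hyv r (hyS' hr))
  have faces_null := boundary_mem_orbitNull (h.eraseIdx_mem 0) (h.eraseIdx_mem' 0) hxy
  convert Submodule.add_mem _ faces_null fillings using 1
  rw [map_sub, map_sub, boundary_groupBoundary,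
    h.boundary_eq_sum fun r hr => h.subset 1 (hyS' hr)]
  simp only [map_add, map_sum, groupBoundary_single, single_sub, Finset.sum_sub_distrib]
  abel

lemma relHomologyVanishes_of_exactModulo (h : IsSimplicialPair G G' S S')
    (column : ExactModulo groupBoundary (orbitChains M G (S 0))
      (orbitNull M G G' (S 0) (S' 0)) (k + 1)) :
    RelHomologyVanishes M G G' (k + 1) := by
  intro x hx hdx
  obtain ⟨w, hw, hxw⟩ := column (single [] x)
    (single_mem_chainsOn (h.subset 0 h.nil_mem) hx) (by
      rw [groupBoundary_single]
      exact single_mem_orbitNull_of_mem_groupNull le_rfl le_rfl (h.subset 0) h.nil_mem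
        (fun _ _ => rfl) hdx)
  refine ⟨w [], apply_mem_of_mem_chainsOn hw [], ?_⟩
  have apply_nil : x - boundary (w []) = lapply (R := ℤ) [] (single [] x - groupBoundary w) := by
    simp [groupBoundary_apply]
  rw [apply_nil]
  refine map_mem_of_mem_orbitNull (lapply []) (fun g hg s hs c hc => ?_) (fun s hs c hc => ?_) hxw
  · obtain rfl := h.eq_nil hs
    have : leftTranslate g c - c ∈ groupNull M G G' (k + 2) := translate_sub_mem_nullChains hg hc
    simpa [smul_list_def] using this
  · obtain rfl := h.eq_nil (h.subset 0 hs)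
    have : c ∈ groupNull M G G' (k + 2) := mem_nullChains_of_mem hc
    simpa using this

theorem relHomologyVanishes (h : IsSimplicialPair G G' S S')
    (surjective : ∀ i ≤ k + 2, ∀ s ∈ S i, ∃ g ∈ G, g • s ∈ S' i)
    (injective : ∀ i ≤ k + 1, ∀ s ∈ S' i, ∀ g ∈ G, g • s ∈ S' i → ∃ g' ∈ G', g' • s = g • s)
    (cones : ∀ i ≤ k + 1, HasCones (S i) (S (i + 1)))
    (cones' : ∀ i ≤ k, HasCones (S' i) (S' (i + 1)))
    (stabilizers : ∀ i j, i + j + 1 = k → ∀ r ∈ S' (i + 2),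
      RelHomologyVanishes M (G ⊓ MulAction.stabilizer Γ r) (G' ⊓ MulAction.stabilizer Γ r) (j + 1))
    (vertices : ∀ r ∈ S' 1, RelHomologyMapVanishes M (G ⊓ MulAction.stabilizer Γ r)
      (G' ⊓ MulAction.stabilizer Γ r) G G' (k + 1)) :
    RelHomologyVanishes M G G' (k + 1) := by
  refine h.relHomologyVanishes_of_exactModulo (h.isDoubleComplex.exactModulo_column_zero
    (fun x hx => h.augmentation (cones 0 (by lia)) hx) (fun i j hij x hx hdx => ?_)
    (fun i j hij => ?_) (fun x hx hdx => h.edge (h.orbitEquiv (surjective 1 (by lia))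
      (injective 1 (by lia))) vertices hx hdx))
  · exact exists_sub_boundary_mem_orbitNull h.le (h.subset _) (h.smul_mem _) (h.smul_mem' _)
      (cones (i + 1) (by lia)) (cones' i (by lia)) hx hdx
  · cases j with
    | zero => exact exactModulo_groupBoundary_zero (h.smul_mem _) (surjective _ (by lia))
    | succ j =>
      exact (h.orbitEquiv (surjective _ (by lia)) (injective _ (by lia))).exactModulo
        (stabilizers i j (by lia))

end IsSimplicialPair

end SimplexChains

section RightTranslation

open Finsupp

variable {Γ M N : Type*} [Group Γ] [AddCommGroup M] [AddCommGroup N]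
  {G G' H H' : Subgroup Γ} {j : ℕ}

/-- Right translation of the vertices.  It commutes with the left action, so it acts on
coinvariants, where translation by a group element is homotopic to the identity. -/
noncomputable abbrev rightTranslate (g : Γ) : (List Γ →₀ M) →ₗ[ℤ] (List Γ →₀ M) :=
  mapChain (· * g)

/-- The relations defining the coinvariants of the homogeneous chains of `G`. -/
noncomputable abbrev coinvariantNull (M : Type*) [AddCommGroup M] (G : Subgroup Γ) (j : ℕ) :
    Submodule ℤ (List Γ →₀ M) :=
  nullChains leftTranslate G (listChains M (G : Set Γ) j) ⊥

/-- The chains that become boundaries in the coinvariants of the homogeneous chains of `G`. -/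
noncomputable def coinvariantBoundaries (M : Type*) [AddCommGroup M] (G : Subgroup Γ) (j : ℕ) :
    Submodule ℤ (List Γ →₀ M) :=
  (listChains M (G : Set Γ) (j + 1)).map boundary ⊔ coinvariantNull M G j

lemma groupNull_succ :
    groupNull M G G' (j + 1) = coinvariantNull M G (j + 1) ⊔ listChains M (G' : Set Γ) (j + 1) := by
  simp [groupNull, nullFamily, nullChains]

lemma exists_sub_boundary_mem_groupNull {x : List Γ →₀ M}
    (hx : x ∈ coinvariantBoundaries M G (j + 1) ⊔ listChains M (G' : Set Γ) (j + 1)) :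
    ∃ y ∈ listChains M (G : Set Γ) (j + 2), x - boundary y ∈ groupNull M G G' (j + 1) := by
  obtain ⟨_, hbc, d, hd, rfl⟩ := Submodule.mem_sup.1 hx
  obtain ⟨_, ⟨y, hy, rfl⟩, c, hc, rfl⟩ := Submodule.mem_sup.1 hbc
  refine ⟨y, hy, ?_⟩
  rw [add_assoc, add_sub_cancel_left, groupNull_succ]
  exact Submodule.add_mem_sup hc hd

lemma map_mem_of_mem_coinvariantNull {K : Submodule ℤ N} (f : (List Γ →₀ M) →ₗ[ℤ] N)
    (h : ∀ g ∈ G, ∀ x ∈ listChains M (G : Set Γ) j, f (leftTranslate g x) - f x ∈ K)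
    {c : List Γ →₀ M} (hc : c ∈ coinvariantNull M G j) : f c ∈ K :=
  map_mem_of_mem_nullChains f h (by simp) hc

lemma coinvariantNull_mono (h : H ≤ G) : coinvariantNull M H j ≤ coinvariantNull M G j := by
  intro c hc
  refine map_mem_of_mem_coinvariantNull LinearMap.id (fun g hg x hx => ?_) hc
  exact translate_sub_mem_nullChains (ρ := leftTranslate) (h hg) (listChains_mono h j hx)

lemma rightTranslate_mem_listChains {g : Γ} (hg : g ∈ G) {c : List Γ →₀ M}
    (hc : c ∈ listChains M (G : Set Γ) j) : rightTranslate g c ∈ listChains M (G : Set Γ) j :=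
  mapChain_mem_listChains (fun _ ha => G.mul_mem ha hg) hc

lemma rightTranslate_mem_coinvariantNull {g : Γ} (hg : g ∈ G) {c : List Γ →₀ M}
    (hc : c ∈ coinvariantNull M G j) : rightTranslate g c ∈ coinvariantNull M G j := by
  refine map_mem_of_mem_coinvariantNull (rightTranslate g) (fun h hh x hx => ?_) hc
  have comm : rightTranslate g (leftTranslate h x) = leftTranslate h (rightTranslate g x) := by
    simp only [mapChain_mapChain, mul_assoc]
  rw [comm]
  exact translate_sub_mem_nullChains hh (rightTranslate_mem_listChains hg hx)

lemma prism_mem_coinvariantNull {g : Γ} (hg : g ∈ G) {c : List Γ →₀ M}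
    (hc : c ∈ coinvariantNull M G j) : prism (· * g) c ∈ coinvariantNull M G (j + 1) := by
  refine map_mem_of_mem_coinvariantNull (prism (· * g)) (fun h hh x hx => ?_) hc
  rw [← mapChain_prism (f := (· * g)) (fun a => mul_assoc h a g)]
  exact translate_sub_mem_nullChains hh (prism_mem_listChains (fun _ ha => G.mul_mem ha hg) hx)

lemma rightTranslate_sub_mem_coinvariantBoundaries {g : Γ} (hg : g ∈ G) {x : List Γ →₀ M}
    (hx : x ∈ listChains M (G : Set Γ) (j + 1)) (hdx : boundary x ∈ coinvariantNull M G j) :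
    rightTranslate g x - x ∈ coinvariantBoundaries M G (j + 1) := by
  rw [← boundary_prism_add]
  exact Submodule.add_mem_sup
    (Submodule.mem_map_of_mem (prism_mem_listChains (fun _ ha => G.mul_mem ha hg) hx))
    (prism_mem_coinvariantNull hg hdx)

lemma mem_of_mem_commutator {L C : Type*} [Group L] [AddCommGroup C] {K : Submodule ℤ C}
    (f : L → C) (hf : ∀ l l', f (l * l') - f l - f l' ∈ K) {s : L} (hs : s ∈ commutator L) :
    f s ∈ K := by
  let φ : L →* Multiplicative (C ⧸ K) := MonoidHom.mk' (fun l => .ofAdd (K.mkQ (f l)))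
    (fun l l' => congrArg Multiplicative.ofAdd (by
      simpa [sub_sub, sub_eq_zero] using (Submodule.Quotient.mk_eq_zero K).2 (hf l l')))
  have hφ : K.mkQ (f s) = 0 :=
    congrArg Multiplicative.toAdd (Abelianization.commutator_subset_ker φ hs : φ s = 1)
  exact (Submodule.Quotient.mk_eq_zero K).1 hφ

/-- If right translations move a chain `x` only by relative cycles, then `l ↦ x - x · η l` is a
homomorphism to an abelian group, and hence vanishes on commutators. -/
lemma sub_rightTranslate_mem_of_mem_commutator {L : Type*} [Group L] {η : L →* Γ}
    (hη : ∀ l, η l ∈ G) {x : List Γ →₀ M} (hx : x ∈ listChains M (G : Set Γ) (j + 1))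
    (hdx : ∀ l, boundary (x - rightTranslate (η l) x) ∈ coinvariantNull M G j) {s : L}
    (hs : s ∈ commutator L) :
    x - rightTranslate (η s) x ∈ coinvariantBoundaries M G (j + 1) := by
  refine mem_of_mem_commutator (fun l => x - rightTranslate (η l) x) (fun l l' => ?_) hs
  convert rightTranslate_sub_mem_coinvariantBoundaries (hη l')
    (Submodule.sub_mem _ hx (rightTranslate_mem_listChains (hη l) hx)) (hdx l) using 1
  rw [map_sub, mapChain_mapChain]
  simp only [map_mul, mul_assoc]
  abel

lemma boundary_sub_rightTranslate_mem_coinvariantNull (hH : H ≤ G) (hH' : H' ≤ G) {g : Γ}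
    (hg : g ∈ G) (hcomm : ∀ h ∈ H', h * g = g * h) {x : List Γ →₀ M}
    (hdx : boundary x ∈ groupNull M H H' (j + 1)) :
    boundary (x - rightTranslate g x) ∈ coinvariantNull M G (j + 1) := by
  rw [groupNull_succ] at hdx
  obtain ⟨c, hc, d, hd, hcd⟩ := Submodule.mem_sup.1 hdx
  have right_eq_left : rightTranslate g d = leftTranslate g d := by
    rw [← sub_eq_zero, ← LinearMap.sub_apply, ← Submodule.mem_bot ℤ]
    refine map_mem_of_mem_chainsOn (rightTranslate g - leftTranslate g) (fun l hl m _ => ?_) hd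
    simp [List.map_congr_left fun a ha => hcomm a (hl.2 a ha)]
  have hcG := coinvariantNull_mono hH hc
  convert Submodule.sub_mem _ (Submodule.sub_mem _ hcG (rightTranslate_mem_coinvariantNull hg hcG))
    (translate_sub_mem_nullChains (ρ := leftTranslate) hg (listChains_mono hH' _ hd)) using 1
  rw [map_sub, boundary_mapChain, ← hcd, map_add, right_eq_left]
  abel

lemma rightTranslate_mem_coinvariantNull_sup_listChains {g : Γ} (hg : g ∈ G) (hG' : G' ≤ G)
    (hconj : ∀ h ∈ H, g⁻¹ * h * g ∈ G') {x : List Γ →₀ M}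
    (hx : x ∈ listChains M (H : Set Γ) j) :
    rightTranslate g x ∈ coinvariantNull M G j ⊔ listChains M (G' : Set Γ) j := by
  have hconj_x := mapChain_mem_listChains hconj hx
  have translate := translate_sub_mem_nullChains (ρ := leftTranslate) (A' := ⊥) hg
    (listChains_mono hG' _ hconj_x)
  convert Submodule.add_mem_sup translate hconj_x using 1
  rw [mapChain_mapChain]
  simp [mul_assoc]

/-- A commutator that conjugates `H` into `G'` kills the relative classes coming from `H`,
provided that it lies in a group of elements centralizing `H'`. -/
theorem relHomologyMapVanishes_of_mem_commutator {L : Type*} [Group L] {η : L →* Γ}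
    (hH : H ≤ G) (hH' : H' ≤ G) (hG' : G' ≤ G) (hη : ∀ l, η l ∈ G)
    (hcomm : ∀ l, ∀ h ∈ H', h * η l = η l * h) {s : L} (hs : s ∈ commutator L)
    (hconj : ∀ h ∈ H, (η s)⁻¹ * h * η s ∈ G') (k : ℕ) :
    RelHomologyMapVanishes M H H' G G' (k + 1) := by
  intro x hx hdx
  refine exists_sub_boundary_mem_groupNull ?_
  have difference := sub_rightTranslate_mem_of_mem_commutator hη (listChains_mono hH _ hx)
    (fun l => boundary_sub_rightTranslate_mem_coinvariantNull hH hH' (hη l) (hcomm l) hdx) hs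
  rw [← sub_add_cancel x (rightTranslate (η s) x)]
  have le : coinvariantNull M G (k + 2) ≤ coinvariantBoundaries M G (k + 2) := le_sup_right
  exact Submodule.add_mem _ (Submodule.mem_sup_left difference)
    (sup_le_sup_right le _ (rightTranslate_mem_coinvariantNull_sup_listChains (hη s) hG' hconj hx))

end RightTranslation

section FirstHomology

open Finsupp

variable {Γ M : Type*} [Group Γ] [AddCommGroup M] {G G' : Subgroup Γ}

lemma single_pair_mul_sub_mem_coinvariantBoundaries {a b : Γ} (ha : a ∈ G) (hb : b ∈ G) (m : M) :
    single [1, a * b] m - single [1, a] m - single [1, b] m ∈ coinvariantBoundaries M G 2 := by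
  have triangle : single [1, a, a * b] m ∈ listChains M (G : Set Γ) 3 :=
    single_mem_chainsOn ⟨rfl, by simp [G.one_mem, ha, G.mul_mem ha hb]⟩ trivial
  have edge : single [1, b] m ∈ listChains M (G : Set Γ) 2 :=
    single_mem_chainsOn ⟨rfl, by simp [G.one_mem, hb]⟩ trivial
  have boundary_triangle := Submodule.mem_map_of_mem (f := boundary) triangle
  have relation : _ ∈ coinvariantBoundaries M G 2 :=
    Submodule.add_mem_sup (Submodule.neg_mem _ boundary_triangle)
      (translate_sub_mem_nullChains ha edge)
  convert relation using 1
  simp [faces]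

lemma single_pair_mem_coinvariantBoundaries {t : Γ} (ht : t ∈ ⁅G, G⁆) (m : M) :
    single [1, t] m ∈ coinvariantBoundaries M G 2 := by
  rw [← Subgroup.map_subtype_commutator] at ht
  obtain ⟨t, ht, rfl⟩ := ht
  exact mem_of_mem_commutator (fun g : G => single [1, (g : Γ)] m)
    (fun g h => single_pair_mul_sub_mem_coinvariantBoundaries g.2 h.2 m) ht

theorem relHomologyVanishes_one_of_commutator
    (h : ∀ g ∈ G, ∃ t ∈ ⁅G, G⁆, t * g ∈ G') : RelHomologyVanishes M G G' 1 := by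
  let K := coinvariantBoundaries M G 2 ⊔ listChains M (G' : Set Γ) 2
  have based_edge {g : Γ} (hg : g ∈ G) (m : M) : single [1, g] m ∈ K := by
    obtain ⟨t, ht, htg⟩ := h g hg
    have edge : single [1, t * g] m ∈ listChains M (G' : Set Γ) 2 :=
      single_mem_chainsOn ⟨rfl, by simp [G'.one_mem, htg]⟩ trivial
    convert Submodule.add_mem_sup (Submodule.sub_mem _ (Submodule.neg_mem _
      (single_pair_mul_sub_mem_coinvariantBoundaries (G.commutator_le_self ht) hg m))
      (single_pair_mem_coinvariantBoundaries ht m)) edge using 1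
    abel
  intro x hx _
  refine exists_sub_boundary_mem_groupNull (map_mem_of_mem_chainsOn LinearMap.id ?_ hx)
  rintro l ⟨hl, hlG⟩ m -
  obtain ⟨a, b, rfl⟩ := List.length_eq_two.1 hl
  obtain ⟨ha, hb⟩ : a ∈ G ∧ b ∈ G := by simpa using hlG
  have hab := G.mul_mem (G.inv_mem ha) hb
  have edge : single [1, a⁻¹ * b] m ∈ listChains M (G : Set Γ) 2 :=
    single_mem_chainsOn ⟨rfl, by simp [G.one_mem, hab]⟩ trivial
  have translate : leftTranslate a (single [1, a⁻¹ * b] m) - single [1, a⁻¹ * b] m ∈ K :=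
    Submodule.mem_sup_left (Submodule.mem_sup_right (translate_sub_mem_nullChains ha edge))
  convert Submodule.add_mem _ translate (based_edge hab m) using 1
  simp

end FirstHomology

section VectorCovectorPairs

open Matrix MulAction

/-- A vector together with a covector.  The stabilizer in `SL` of a pair `x` with
`x.covec ⬝ᵥ x.vec = 1` is a copy of `SL` of one dimension less. -/
@[ext]
structure VecCovec (ι R : Type*) where
  vec : ι → R
  covec : ι → R

variable {ι R : Type*} [Fintype ι] [CommRing R]

lemma vecMulVec_mulVec_eq_smul (u v w : ι → R) : vecMulVec u v *ᵥ w = (v ⬝ᵥ w) • u := by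
  rw [vecMulVec_mulVec, op_smul_eq_smul]

lemma coe_mul_coe_inv [DecidableEq ι] (g : SpecialLinearGroup ι R) : g.1 * g⁻¹.1 = 1 :=
  congrArg Subtype.val (mul_inv_cancel g)

lemma coe_inv_mul_coe [DecidableEq ι] (g : SpecialLinearGroup ι R) : g⁻¹.1 * g.1 = 1 :=
  congrArg Subtype.val (inv_mul_cancel g)

/-- The vectors annihilated by all covectors of `σ`. -/
def vecPerp (σ : List (VecCovec ι R)) : Submodule R (ι → R) where
  carrier := {w | ∀ x ∈ σ, x.covec ⬝ᵥ w = 0}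
  add_mem' ha hb x hx := by rw [dotProduct_add, ha x hx, hb x hx, add_zero]
  zero_mem' _ _ := dotProduct_zero _
  smul_mem' c w hw x hx := by rw [dotProduct_smul, hw x hx, smul_zero]

/-- The covectors annihilating all vectors of `σ`. -/
def covecPerp (σ : List (VecCovec ι R)) : Submodule R (ι → R) where
  carrier := {h | ∀ x ∈ σ, h ⬝ᵥ x.vec = 0}
  add_mem' ha hb x hx := by rw [add_dotProduct, ha x hx, hb x hx, add_zero]
  zero_mem' _ _ := zero_dotProduct _
  smul_mem' c w hw x hx := by rw [smul_dotProduct, hw x hx, smul_zero]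

namespace VecCovec

/-- Each of the two covectors annihilates the other vector. -/
def Orthogonal (x y : VecCovec ι R) : Prop :=
  x.covec ⬝ᵥ y.vec = 0 ∧ y.covec ⬝ᵥ x.vec = 0

/-- The pair `x` is orthogonal to every member of `σ`. -/
def OrthogonalTo (x : VecCovec ι R) (σ : List (VecCovec ι R)) : Prop :=
  ∀ y ∈ σ, x.Orthogonal y

/-- The covector takes the value `1` on the vector. -/
def IsNormalized (x : VecCovec ι R) : Prop :=
  x.covec ⬝ᵥ x.vec = 1

variable {x y u : VecCovec ι R} {σ τ : List (VecCovec ι R)}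

lemma Orthogonal.symm (h : x.Orthogonal y) : y.Orthogonal x :=
  ⟨h.2, h.1⟩

lemma orthogonalTo_iff : x.OrthogonalTo σ ↔ x.vec ∈ vecPerp σ ∧ x.covec ∈ covecPerp σ :=
  ⟨fun h => ⟨fun y hy => (h y hy).2, fun y hy => (h y hy).1⟩,
    fun h y hy => ⟨h.2 y hy, h.1 y hy⟩⟩

lemma OrthogonalTo.vec_mem (h : x.OrthogonalTo σ) : x.vec ∈ vecPerp σ :=
  (orthogonalTo_iff.1 h).1

lemma OrthogonalTo.covec_mem (h : x.OrthogonalTo σ) : x.covec ∈ covecPerp σ :=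
  (orthogonalTo_iff.1 h).2

lemma orthogonalTo_cons :
    x.OrthogonalTo (u :: τ) ↔ x.Orthogonal u ∧ x.OrthogonalTo τ :=
  List.forall_mem_cons

lemma orthogonalTo_append :
    x.OrthogonalTo (σ ++ τ) ↔ x.OrthogonalTo σ ∧ x.OrthogonalTo τ :=
  List.forall_mem_append

variable [DecidableEq ι]

instance : MulAction (SpecialLinearGroup ι R) (VecCovec ι R) where
  smul g x := ⟨g.1 *ᵥ x.vec, x.covec ᵥ* g⁻¹.1⟩
  one_smul x := by
    ext1
    · exact one_mulVec x.vec
    · change x.covec ᵥ* (1 : SpecialLinearGroup ι R)⁻¹.1 = x.covec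
      rw [inv_one]
      exact vecMul_one x.covec
  mul_smul g h x := by
    ext1
    · exact (mulVec_mulVec x.vec g.1 h.1).symm
    · exact (congrArg (x.covec ᵥ* ·) (congrArg Subtype.val (mul_inv_rev g h))).trans
        (vecMul_vecMul x.covec h⁻¹.1 g⁻¹.1).symm

lemma smul_vec (g : SpecialLinearGroup ι R) (x : VecCovec ι R) : (g • x).vec = g.1 *ᵥ x.vec :=
  rfl

lemma smul_covec (g : SpecialLinearGroup ι R) (x : VecCovec ι R) :
    (g • x).covec = x.covec ᵥ* g⁻¹.1 :=
  rfl

lemma smul_covec_dotProduct_smul_vec (g : SpecialLinearGroup ι R) (x y : VecCovec ι R) :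
    (g • x).covec ⬝ᵥ (g • y).vec = x.covec ⬝ᵥ y.vec := by
  rw [smul_vec, smul_covec, dotProduct_mulVec, vecMul_vecMul, coe_inv_mul_coe, vecMul_one]

lemma Orthogonal.smul (h : x.Orthogonal y) (g : SpecialLinearGroup ι R) :
    (g • x).Orthogonal (g • y) := by
  simpa only [Orthogonal, smul_covec_dotProduct_smul_vec] using h

lemma IsNormalized.smul (h : x.IsNormalized) (g : SpecialLinearGroup ι R) :
    (g • x).IsNormalized := by
  simpa only [IsNormalized, smul_covec_dotProduct_smul_vec] using h

end VecCovec

variable {σ τ : List (VecCovec ι R)} {x u : VecCovec ι R} {π : Matrix ι ι R}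

/-- `π` is the projection onto the vectors annihilated by all covectors of `σ`, along the span of
the vectors of `σ`.  The conditions on the left action of `π` on covectors make the notion
self-dual. -/
structure IsProjection (σ : List (VecCovec ι R)) (π : Matrix ι ι R) : Prop where
  mulVec_vec : ∀ x ∈ σ, π *ᵥ x.vec = 0
  vecMul_covec : ∀ x ∈ σ, x.covec ᵥ* π = 0
  mulVec_eq : ∀ w ∈ vecPerp σ, π *ᵥ w = w
  vecMul_eq : ∀ h ∈ covecPerp σ, h ᵥ* π = h

/-- The span of the vectors of `σ` is complementary to the common kernel of its covectors. -/
def Nondegenerate (σ : List (VecCovec ι R)) : Prop :=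
  ∃ π, IsProjection σ π

lemma nondegenerate_nil : Nondegenerate ([] : List (VecCovec ι R)) := by
  classical
  exact ⟨1, by constructor <;> simp⟩

lemma Nondegenerate.perm (hσ : Nondegenerate σ) (h : σ.Perm τ) : Nondegenerate τ := by
  obtain ⟨π, hπ⟩ := hσ
  refine ⟨π, fun x hx => hπ.mulVec_vec x (h.mem_iff.2 hx),
    fun x hx => hπ.vecMul_covec x (h.mem_iff.2 hx), fun w hw => hπ.mulVec_eq w ?_,
    fun w hw => hπ.vecMul_eq w ?_⟩ <;>
  exact fun x hx => hw x (h.mem_iff.1 hx)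

lemma IsProjection.nondegenerate_cons (hπ : IsProjection σ π) {c : R}
    (hc : c * (x.covec ⬝ᵥ π *ᵥ x.vec) = 1) : Nondegenerate (x :: σ) := by
  refine ⟨π - c • vecMulVec (π *ᵥ x.vec) (x.covec ᵥ* π),
    fun y hy => ?_, fun y hy => ?_, fun w hw => ?_, fun w hw => ?_⟩
  · rw [sub_mulVec, smul_mulVec, vecMulVec_mulVec_eq_smul, ← dotProduct_mulVec]
    rcases List.mem_cons.1 hy with rfl | hy
    · rw [smul_smul, hc, one_smul, sub_self]
    · simp [hπ.mulVec_vec y hy]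
  · rw [vecMul_sub, vecMul_smul, vecMul_vecMulVec]
    rcases List.mem_cons.1 hy with rfl | hy
    · rw [smul_smul, hc, one_smul, sub_self]
    · simp [dotProduct_mulVec, hπ.vecMul_covec y hy]
  · obtain ⟨hwx, hwσ⟩ := List.forall_mem_cons.1 hw
    rw [sub_mulVec, smul_mulVec, vecMulVec_mulVec_eq_smul, ← dotProduct_mulVec,
      hπ.mulVec_eq w hwσ, hwx, zero_smul, smul_zero, sub_zero]
  · obtain ⟨hwx, hwσ⟩ := List.forall_mem_cons.1 hw
    rw [vecMul_sub, vecMul_smul, vecMul_vecMulVec, dotProduct_mulVec w, hπ.vecMul_eq w hwσ, hwx,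
      zero_smul, smul_zero, sub_zero]

lemma Nondegenerate.cons (hσ : Nondegenerate σ) (hu : u.OrthogonalTo σ) (hu' : u.IsNormalized) :
    Nondegenerate (u :: σ) := by
  obtain ⟨π, hπ⟩ := hσ
  refine hπ.nondegenerate_cons (c := 1) ?_
  rw [hπ.mulVec_eq _ hu.vec_mem, one_mul, hu']

lemma Nondegenerate.of_cons (hσ : Nondegenerate (u :: σ)) (hu : u.OrthogonalTo σ)
    (hu' : u.IsNormalized) : Nondegenerate σ := by
  obtain ⟨π, hπ⟩ := hσ
  have normalized : u.covec ⬝ᵥ u.vec = 1 := hu'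
  refine ⟨π + vecMulVec u.vec u.covec, fun x hx => ?_, fun x hx => ?_, fun w hw => ?_,
    fun w hw => ?_⟩
  · simp [add_mulVec, vecMulVec_mulVec_eq_smul, (hu x hx).1, hπ.mulVec_vec x (by simp [hx])]
  · simp [vecMul_add, vecMul_vecMulVec, (hu x hx).2, hπ.vecMul_covec x (by simp [hx])]
  · have project : π *ᵥ (w - (u.covec ⬝ᵥ w) • u.vec) = w - (u.covec ⬝ᵥ w) • u.vec :=
      hπ.mulVec_eq _ (List.forall_mem_cons.2
        ⟨by simp [normalized], (vecPerp σ).sub_mem hw ((vecPerp σ).smul_mem _ hu.vec_mem)⟩)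
    rw [mulVec_sub, mulVec_smul, hπ.mulVec_vec u (by simp), smul_zero, sub_zero] at project
    rw [add_mulVec, vecMulVec_mulVec_eq_smul, project, sub_add_cancel]
  · have project : (w - (w ⬝ᵥ u.vec) • u.covec) ᵥ* π = w - (w ⬝ᵥ u.vec) • u.covec :=
      hπ.vecMul_eq _ (List.forall_mem_cons.2
        ⟨by simp [normalized], (covecPerp σ).sub_mem hw ((covecPerp σ).smul_mem _ hu.covec_mem)⟩)
    rw [sub_vecMul, smul_vecMul, hπ.vecMul_covec u (by simp), smul_zero, sub_zero] at project
    rw [vecMul_add, vecMul_vecMulVec, project, sub_add_cancel]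

lemma nondegenerate_append_cons_iff (hu : u.OrthogonalTo τ) (hσ : ∀ x ∈ σ, x.Orthogonal u)
    (hu' : u.IsNormalized) : Nondegenerate (σ ++ u :: τ) ↔ Nondegenerate (σ ++ τ) := by
  have orthogonal : u.OrthogonalTo (σ ++ τ) :=
    VecCovec.orthogonalTo_append.2 ⟨fun x hx => (hσ x hx).symm, hu⟩
  exact ⟨fun h => (h.perm List.perm_middle).of_cons orthogonal hu',
    fun h => (h.cons orthogonal hu').perm List.perm_middle.symm⟩

variable [DecidableEq ι]

lemma mem_smul_list {Γ P : Type*} [Group Γ] [MulAction Γ P] {g : Γ} {l : List P} {p : P} :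
    p ∈ g • l ↔ ∃ q ∈ l, g • q = p := by
  simp [smul_list_def]

lemma smul_list_eq_iff {Γ P : Type*} [Group Γ] [MulAction Γ P] {g : Γ} {l : List P} :
    g • l = l ↔ ∀ p ∈ l, g • p = p := by
  simpa [smul_list_def] using List.map_inj_left (l := l) (f := (g • ·)) (g := id)

lemma VecCovec.OrthogonalTo.smul (h : x.OrthogonalTo τ) (g : SpecialLinearGroup ι R) :
    (g • x).OrthogonalTo (g • τ) := by
  intro y hy
  obtain ⟨z, hz, rfl⟩ := mem_smul_list.1 hy
  exact (h z hz).smul g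

lemma Nondegenerate.smul (h : Nondegenerate σ) (g : SpecialLinearGroup ι R) :
    Nondegenerate (g • σ) := by
  obtain ⟨π, hπ⟩ := h
  refine ⟨g.1 * π * g⁻¹.1, fun x hx => ?_, fun x hx => ?_, fun w hw => ?_, fun w hw => ?_⟩
  · obtain ⟨y, hy, rfl⟩ := mem_smul_list.1 hx
    rw [VecCovec.smul_vec, mulVec_mulVec, Matrix.mul_assoc, coe_inv_mul_coe, Matrix.mul_one,
      ← mulVec_mulVec, hπ.mulVec_vec y hy, mulVec_zero]
  · obtain ⟨y, hy, rfl⟩ := mem_smul_list.1 hx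
    rw [VecCovec.smul_covec, vecMul_vecMul, ← Matrix.mul_assoc, ← Matrix.mul_assoc,
      coe_inv_mul_coe, Matrix.one_mul, ← vecMul_vecMul, hπ.vecMul_covec y hy, zero_vecMul]
  · have project : π *ᵥ (g⁻¹.1 *ᵥ w) = g⁻¹.1 *ᵥ w := hπ.mulVec_eq _ fun x hx => by
      rw [dotProduct_mulVec]
      exact hw (g • x) (mem_smul_list.2 ⟨x, hx, rfl⟩)
    rw [← mulVec_mulVec, ← mulVec_mulVec, project, mulVec_mulVec, coe_mul_coe_inv, one_mulVec]
  · have project : (w ᵥ* g.1) ᵥ* π = w ᵥ* g.1 := hπ.vecMul_eq _ fun x hx => by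
      rw [← dotProduct_mulVec]
      exact hw (g • x) (mem_smul_list.2 ⟨x, hx, rfl⟩)
    rw [← vecMul_vecMul, ← vecMul_vecMul, project, vecMul_vecMul, coe_mul_coe_inv, vecMul_one]

end VectorCovectorPairs

section NondegenerateOverField

open Matrix

variable {ι D : Type*} [Fintype ι] [Field D] {σ τ : List (VecCovec ι D)}

lemma vecPerp_ne_bot (h : σ.length < Fintype.card ι) : vecPerp σ ≠ ⊥ := by
  let covecs := Matrix.of fun i : Fin σ.length => (σ.get i).covec
  have ker_eq : LinearMap.ker covecs.mulVecLin = vecPerp σ := by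
    ext w
    rw [LinearMap.mem_ker, funext_iff]
    exact (List.forall_mem_iff_get (p := fun x : VecCovec ι D => x.covec ⬝ᵥ w = 0)).symm
  rw [← ker_eq]
  exact LinearMap.ker_ne_bot_of_finrank_lt (by simpa using h)

lemma Nondegenerate.exists_covec (hσ : Nondegenerate σ) {w : ι → D} (hw : w ∈ vecPerp σ)
    (hw₀ : w ≠ 0) : ∃ h ∈ covecPerp σ, h ⬝ᵥ w = 1 := by
  classical
  obtain ⟨π, hπ⟩ := hσ
  obtain ⟨i, hi⟩ := Function.ne_iff.1 hw₀
  refine ⟨(w i)⁻¹ • (Pi.single i 1 ᵥ* π), (covecPerp σ).smul_mem _ fun x hx => ?_, ?_⟩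
  · rw [← dotProduct_mulVec, hπ.mulVec_vec x hx, dotProduct_zero]
  · rw [smul_dotProduct, ← dotProduct_mulVec, hπ.mulVec_eq w hw, single_dotProduct, one_mul]
    exact inv_mul_cancel₀ hi

lemma Nondegenerate.exists_vec (hσ : Nondegenerate σ) {h : ι → D} (hh : h ∈ covecPerp σ)
    (hh₀ : h ≠ 0) : ∃ w ∈ vecPerp σ, h ⬝ᵥ w = 1 := by
  classical
  obtain ⟨π, hπ⟩ := hσ
  obtain ⟨i, hi⟩ := Function.ne_iff.1 hh₀
  refine ⟨(h i)⁻¹ • (π *ᵥ Pi.single i 1), (vecPerp σ).smul_mem _ fun x hx => ?_, ?_⟩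
  · rw [dotProduct_mulVec, hπ.vecMul_covec x hx, zero_dotProduct]
  · rw [dotProduct_smul, dotProduct_mulVec, hπ.vecMul_eq h hh, dotProduct_single, mul_one]
    exact inv_mul_cancel₀ hi

lemma Nondegenerate.exists_orthogonalTo (hσ : Nondegenerate σ) (h : σ.length < Fintype.card ι) :
    ∃ x : VecCovec ι D, x.OrthogonalTo σ ∧ x.IsNormalized := by
  obtain ⟨w, hw, hw₀⟩ := Submodule.exists_mem_ne_zero_of_ne_bot (vecPerp_ne_bot h)
  obtain ⟨f, hf, hfw⟩ := hσ.exists_covec hw hw₀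
  exact ⟨⟨w, f⟩, VecCovec.orthogonalTo_iff.2 ⟨hw, hf⟩, hfw⟩

lemma exists_forall_bilinear_ne_zero [Infinite D] {κ V W : Type*} [Finite κ] [AddCommGroup V]
    [Module D V] [AddCommGroup W] [Module D W] (B : κ → V →ₗ[D] W →ₗ[D] D) (p : Submodule D V)
    (q : Submodule D W) (h : ∀ i, ∃ v ∈ p, ∃ w ∈ q, B i v w ≠ 0) :
    ∃ v ∈ p, ∃ w ∈ q, ∀ i, B i v w ≠ 0 := by
  choose v hv w hw hvw using h
  obtain ⟨v', hv', hvw'⟩ := Module.Dual.exists_forall_mem_ne_zero_of_forall_exists p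
    (fun i => (B i).flip (w i)) fun i => ⟨v i, hv i, hvw i⟩
  obtain ⟨w', hw', hvw''⟩ := Module.Dual.exists_forall_mem_ne_zero_of_forall_exists q
    (fun i => B i v') fun i => ⟨w i, hw i, hvw' i⟩
  exact ⟨v', hv', w', hw', hvw''⟩

/-- For a covector `f` and a vector `v`, extending `σ` by `(v, f)` is nondegenerate as soon as
`f ⬝ᵥ π *ᵥ v ≠ 0` for the projection `π` belonging to `σ`: finitely many nonzero bilinear forms
have a common nonzero value over an infinite field. -/
lemma exists_nondegenerate_cons [Infinite D] (F : Set (List (VecCovec ι D))) (hF : F.Finite)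
    (hτ : Nondegenerate τ) (hlt : τ.length < Fintype.card ι)
    (h : ∀ σ ∈ F, Nondegenerate (σ ++ τ) ∧ (σ ++ τ).length < Fintype.card ι) :
    ∃ y : VecCovec ι D, y.OrthogonalTo τ ∧ y.IsNormalized ∧
      ∀ σ ∈ F, Nondegenerate (y :: (σ ++ τ)) := by
  classical
  have : Finite ↑(insert [] F) := hF.insert []
  have nondegenerate (σ : ↑(insert [] F)) :
      Nondegenerate (σ.1 ++ τ) ∧ (σ.1 ++ τ).length < Fintype.card ι := by
    obtain ⟨_, rfl | hσ⟩ := σ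
    exacts [⟨hτ, hlt⟩, h _ hσ]
  choose π hπ using fun σ => (nondegenerate σ).1
  obtain ⟨f, hf, v, hv, hfv⟩ := exists_forall_bilinear_ne_zero
    (fun σ => toLinearMap₂' D (π σ)) (covecPerp τ) (vecPerp τ) fun σ => by
      obtain ⟨x, hx, hx'⟩ := (nondegenerate σ).1.exists_orthogonalTo (nondegenerate σ).2
      have hxτ := (VecCovec.orthogonalTo_append.1 hx).2
      refine ⟨x.covec, hxτ.covec_mem, x.vec, hxτ.vec_mem, ?_⟩
      rw [toLinearMap₂'_apply', (hπ σ).mulVec_eq _ hx.vec_mem, hx']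
      exact one_ne_zero
  simp only [toLinearMap₂'_apply'] at hfv
  have hfv₀ : f ⬝ᵥ v ≠ 0 := by
    have nil_mem : [] ∈ insert [] F := Set.mem_insert _ _
    simpa only [(hπ ⟨[], nil_mem⟩).mulVec_eq v hv] using hfv ⟨[], nil_mem⟩
  refine ⟨⟨v, (f ⬝ᵥ v)⁻¹ • f⟩,
    VecCovec.orthogonalTo_iff.2 ⟨hv, (covecPerp τ).smul_mem _ hf⟩, ?_, fun σ hσ => ?_⟩
  · exact (smul_dotProduct _ _ _).trans (inv_mul_cancel₀ hfv₀)
  · refine (hπ ⟨σ, .inr hσ⟩).nondegenerate_cons (inv_mul_cancel₀ ?_)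
    rw [smul_dotProduct]
    exact mul_ne_zero (inv_ne_zero hfv₀) (hfv ⟨σ, .inr hσ⟩)

end NondegenerateOverField

section NondegenerateSimplices

open Matrix MulAction

variable {ι D : Type*} [Fintype ι] [Field D] {τ : List (VecCovec ι D)} {u : VecCovec ι D} {i : ℕ}

/-- The simplices, with `i` vertices, of the complex on which the stabilizer of `τ` acts: lists of
normalized pairs orthogonal to `τ` all of whose faces are nondegenerate, also after adding `τ`. -/
def simplices (τ : List (VecCovec ι D)) (i : ℕ) : Set (List (VecCovec ι D)) :=
  {s | s.length = i ∧ (∀ x ∈ s, x.OrthogonalTo τ ∧ x.IsNormalized) ∧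
    ∀ t, t.Sublist s → Nondegenerate (t ++ τ)}

lemma eraseIdx_mem_simplices {s : List (VecCovec ι D)} (hs : s ∈ simplices τ (i + 1)) {j : ℕ}
    (hj : j < s.length) : s.eraseIdx j ∈ simplices τ i := by
  have sublist := List.eraseIdx_sublist s j
  refine ⟨?_, fun x hx => hs.2.1 x (sublist.subset hx), fun t ht => hs.2.2 t (ht.trans sublist)⟩
  rw [List.length_eraseIdx_of_lt hj, hs.1, Nat.add_sub_cancel]

lemma mem_simplices_cons (hu : u.OrthogonalTo τ) (hu' : u.IsNormalized)
    {s : List (VecCovec ι D)} :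
    s ∈ simplices (u :: τ) i ↔ s ∈ simplices τ i ∧ ∀ x ∈ s, x.Orthogonal u := by
  have nondegenerate_iff (hs : ∀ x ∈ s, x.Orthogonal u) {t} (ht : t.Sublist s) :
      Nondegenerate (t ++ u :: τ) ↔ Nondegenerate (t ++ τ) :=
    nondegenerate_append_cons_iff hu (fun x hx => hs x (ht.subset hx)) hu'
  constructor
  · rintro ⟨hlen, hvert, hnd⟩
    have horth x hx := (VecCovec.orthogonalTo_cons.1 (hvert x hx).1)
    exact ⟨⟨hlen, fun x hx => ⟨(horth x hx).2, (hvert x hx).2⟩,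
      fun t ht => (nondegenerate_iff (fun x hx => (horth x hx).1) ht).1 (hnd t ht)⟩,
      fun x hx => (horth x hx).1⟩
  · rintro ⟨⟨hlen, hvert, hnd⟩, horth⟩
    exact ⟨hlen, fun x hx =>
      ⟨VecCovec.orthogonalTo_cons.2 ⟨horth x hx, (hvert x hx).1⟩, (hvert x hx).2⟩,
      fun t ht => (nondegenerate_iff horth ht).2 (hnd t ht)⟩

lemma hasCones_simplices [Infinite D] (hτ : Nondegenerate τ)
    (hi : i + τ.length < Fintype.card ι) : HasCones (simplices τ i) (simplices τ (i + 1)) := by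
  intro F hF
  let faces : Set (List (VecCovec ι D)) := ⋃ s ∈ F, {t | t.Sublist s}
  have finite : faces.Finite := F.finite_toSet.biUnion fun s _ =>
    s.sublists.finite_toSet.subset fun t ht => List.mem_sublists.2 ht
  obtain ⟨y, hyτ, hy, hyF⟩ := exists_nondegenerate_cons faces finite hτ (by lia) (by
    intro t ht
    obtain ⟨s, hs, hts : t.Sublist s⟩ := Set.mem_iUnion₂.1 ht
    have length_le := hts.length_le
    rw [(hF hs).1] at length_le
    exact ⟨(hF hs).2.2 t hts, by rw [List.length_append]; lia⟩)
  refine ⟨y, fun s hs => ⟨by simp [(hF hs).1], ?_, fun t ht => ?_⟩⟩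
  · exact List.forall_mem_cons.2 ⟨⟨hyτ, hy⟩, (hF hs).2.1⟩
  · rcases List.sublist_cons_iff.1 ht with ht | ⟨r, rfl, hr⟩
    · exact (hF hs).2.2 t ht
    · exact hyF r (Set.mem_biUnion hs hr)

variable [DecidableEq ι]

lemma smul_mem_simplices {s : List (VecCovec ι D)} (hs : s ∈ simplices τ i)
    {g : SpecialLinearGroup ι D} (hg : g ∈ stabilizer (SpecialLinearGroup ι D) τ) :
    g • s ∈ simplices τ i := by
  have hgτ : g • τ = τ := hg
  refine ⟨by simp [smul_list_def, hs.1], fun x hx => ?_, fun t ht => ?_⟩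
  · obtain ⟨y, hy, rfl⟩ := mem_smul_list.1 hx
    have orthogonal := (hs.2.1 y hy).1.smul g
    rw [hgτ] at orthogonal
    exact ⟨orthogonal, (hs.2.1 y hy).2.smul g⟩
  · obtain ⟨l, hl, rfl⟩ := List.sublist_map_iff.1 ht
    have nondegenerate := (hs.2.2 l hl).smul g
    rwa [smul_list_def, List.map_append, ← smul_list_def g τ, hgτ] at nondegenerate

end NondegenerateSimplices

section Frames

open Matrix MulAction

variable {ι κ R : Type*} [CommRing R]

/-- The matrix whose columns are the vectors of the family `x`. -/
def vecMatrix (x : κ → VecCovec ι R) : Matrix ι κ R :=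
  of fun i j => (x j).vec i

/-- The matrix whose rows are the covectors of the family `x`. -/
def covecMatrix (x : κ → VecCovec ι R) : Matrix κ ι R :=
  of fun j => (x j).covec

variable [Fintype ι] [DecidableEq κ]

/-- The covectors of `x` are dual to its vectors, so that `x` is a basis, with its dual basis, of a
direct summand of the free module on `ι`. -/
def IsDualFrame (x : κ → VecCovec ι R) : Prop :=
  covecMatrix x * vecMatrix x = 1

lemma isDualFrame_pair {x y : VecCovec ι R} (hx : x.IsNormalized) (hy : y.IsNormalized)
    (hxy : x.Orthogonal y) : IsDualFrame ![x, y] := by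
  ext i j
  fin_cases i <;> fin_cases j
  exacts [hx, hxy.1, hxy.2, hy]

variable [Fintype κ] [DecidableEq ι]

/-- The matrix `A` on the summand spanned by the dual frame `x`, and the identity on its
complement. -/
def frameMatrix (x : κ → VecCovec ι R) (A : Matrix κ κ R) : Matrix ι ι R :=
  1 + vecMatrix x * (A - 1) * covecMatrix x

variable {x : κ → VecCovec ι R} {σ : List (VecCovec ι R)}

lemma frameMatrix_mul_vecMatrix (hx : IsDualFrame x) (A : Matrix κ κ R) :
    frameMatrix x A * vecMatrix x = vecMatrix x * A := by
  rw [frameMatrix, Matrix.add_mul, Matrix.one_mul, Matrix.mul_assoc, hx, Matrix.mul_one,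
    Matrix.mul_sub, Matrix.mul_one, add_sub_cancel]

lemma covecMatrix_mul_frameMatrix (hx : IsDualFrame x) (A : Matrix κ κ R) :
    covecMatrix x * frameMatrix x A = A * covecMatrix x := by
  rw [frameMatrix, Matrix.mul_add, Matrix.mul_one, Matrix.mul_assoc, ← Matrix.mul_assoc, hx,
    Matrix.one_mul, Matrix.sub_mul, Matrix.one_mul, add_sub_cancel]

lemma frameMatrix_mul (hx : IsDualFrame x) (A B : Matrix κ κ R) :
    frameMatrix x (A * B) = frameMatrix x A * frameMatrix x B := by
  have product : A * B - 1 = (A - 1) + A * (B - 1) := by noncomm_ring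
  rw [frameMatrix.eq_def x B, Matrix.mul_add, Matrix.mul_one, ← Matrix.mul_assoc,
    ← Matrix.mul_assoc, frameMatrix_mul_vecMatrix hx, frameMatrix, frameMatrix, product,
    Matrix.mul_add, Matrix.add_mul, ← add_assoc, ← Matrix.mul_assoc]

/-- The inclusion of the special linear group of the summand spanned by a dual frame. -/
def frameHom (hx : IsDualFrame x) : SpecialLinearGroup κ R →* SpecialLinearGroup ι R where
  toFun A := ⟨frameMatrix x A.1, by
    rw [frameMatrix, Matrix.mul_assoc, det_one_add_mul_comm, Matrix.mul_assoc, hx, Matrix.mul_one,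
      add_sub_cancel, A.2]⟩
  map_one' := Subtype.ext (by simp [frameMatrix])
  map_mul' A B := Subtype.ext (frameMatrix_mul hx A.1 B.1)

lemma coe_frameHom (hx : IsDualFrame x) (A : SpecialLinearGroup κ R) :
    (frameHom hx A).1 = frameMatrix x A.1 :=
  rfl

lemma coe_frameHom_inv (hx : IsDualFrame x) (A : SpecialLinearGroup κ R) :
    (frameHom hx A)⁻¹.1 = frameMatrix x A⁻¹.1 := by
  rw [← map_inv, coe_frameHom]

lemma frameHom_smul_vec (hx : IsDualFrame x) (A : SpecialLinearGroup κ R) (j : κ) :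
    (frameHom hx A • x j).vec = vecMatrix x *ᵥ A.1.col j :=
  funext fun i => congrFun₂ (frameMatrix_mul_vecMatrix hx A.1) i j

lemma frameHom_smul_covec (hx : IsDualFrame x) (A : SpecialLinearGroup κ R) (j : κ) :
    (frameHom hx A • x j).covec = A⁻¹.1.row j ᵥ* covecMatrix x := by
  rw [VecCovec.smul_covec, coe_frameHom_inv]
  exact congrFun (covecMatrix_mul_frameMatrix hx A⁻¹.1) j

lemma frameHom_smul_of_orthogonal (hx : IsDualFrame x) {z : VecCovec ι R}
    (hz : ∀ j, z.Orthogonal (x j)) (A : SpecialLinearGroup κ R) : frameHom hx A • z = z := by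
  have covec_mulVec : covecMatrix x *ᵥ z.vec = 0 := funext fun j => (hz j).2
  have vecMul_vec : z.covec ᵥ* vecMatrix x = 0 := funext fun j => (hz j).1
  ext1
  · rw [VecCovec.smul_vec, coe_frameHom, frameMatrix, add_mulVec, ← mulVec_mulVec, covec_mulVec,
      one_mulVec, mulVec_zero, add_zero]
  · rw [VecCovec.smul_covec, coe_frameHom_inv, frameMatrix, vecMul_add, Matrix.mul_assoc,
      ← vecMul_vecMul, vecMul_vec, vecMul_one, zero_vecMul, add_zero]

lemma mul_frameHom_of_smul_eq (hx : IsDualFrame x) {g : SpecialLinearGroup ι R}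
    (hg : ∀ j, g • x j = x j) (A : SpecialLinearGroup κ R) :
    g * frameHom hx A = frameHom hx A * g := by
  have mul_vec : g.1 * vecMatrix x = vecMatrix x := by
    ext i j
    exact congrFun (congrArg VecCovec.vec (hg j)) i
  have covec_mul_inv : covecMatrix x * g⁻¹.1 = covecMatrix x := by
    ext j i
    exact congrFun (congrArg VecCovec.covec (hg j)) i
  have covec_mul : covecMatrix x * g.1 = covecMatrix x := by
    nth_rw 1 [← covec_mul_inv]
    rw [Matrix.mul_assoc, coe_inv_mul_coe, Matrix.mul_one]
  refine Subtype.ext ?_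
  change g.1 * frameMatrix x A.1 = frameMatrix x A.1 * g.1
  rw [frameMatrix, Matrix.mul_add, Matrix.add_mul, ← Matrix.mul_assoc, ← Matrix.mul_assoc, mul_vec,
    Matrix.mul_assoc _ _ g.1, covec_mul, Matrix.mul_one, Matrix.one_mul]

lemma frameHom_mem_stabilizer (hx : IsDualFrame x) (hxσ : ∀ j, (x j).OrthogonalTo σ)
    (A : SpecialLinearGroup κ R) : frameHom hx A ∈ stabilizer (SpecialLinearGroup ι R) σ :=
  smul_list_eq_iff.2 fun z hz => frameHom_smul_of_orthogonal hx (fun j => (hxσ j z hz).symm) A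

lemma frameHom_mem_commutator [Group.IsPerfect (SpecialLinearGroup κ R)] (hx : IsDualFrame x)
    (hxσ : ∀ j, (x j).OrthogonalTo σ) (A : SpecialLinearGroup κ R) :
    frameHom hx A ∈ ⁅stabilizer (SpecialLinearGroup ι R) σ,
      stabilizer (SpecialLinearGroup ι R) σ⁆ := by
  have range_le : (frameHom hx).range ≤ stabilizer (SpecialLinearGroup ι R) σ := by
    rintro _ ⟨B, rfl⟩
    exact frameHom_mem_stabilizer hx hxσ B
  have perfect := Group.IsPerfect.range (frameHom hx)
  have mem_range : frameHom hx A ∈ (frameHom hx).range := ⟨A, rfl⟩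
  rw [← (frameHom hx).range.commutator_eq_self] at mem_range
  exact Subgroup.commutator_mono range_le range_le mem_range

lemma coe_frameHom_transvection {D : Type*} [Field D] {x : κ → VecCovec ι D} (hx : IsDualFrame x)
    {i j : κ} (hij : i ≠ j) (c : D) :
    (frameHom hx (SpecialLinearGroup.transvection hij c)).1 =
      1 + c • vecMulVec (x i).vec (x j).covec := by
  rw [coe_frameHom, SpecialLinearGroup.transvection_coe, frameMatrix, add_sub_cancel_left]
  congr 1
  ext a b
  simp [Matrix.mul_apply, single_apply, ite_and, vecMulVec_apply, vecMatrix, covecMatrix]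
  ring

/-- The rotation `e₀ ↦ e₁ ↦ -e₀` of the plane. -/
def quarterTurn : SpecialLinearGroup (Fin 2) R :=
  ⟨!![0, -1; 1, 0], by simp [det_fin_two]⟩

lemma frameHom_quarterTurn_smul {x y : VecCovec ι R} (h : IsDualFrame ![x, y]) :
    frameHom h quarterTurn • x = y := by
  ext1
  · refine (frameHom_smul_vec h quarterTurn 0).trans ?_
    ext i
    simp [mulVec, dotProduct, quarterTurn, vecMatrix]
  · have inverse : (quarterTurn⁻¹ : SpecialLinearGroup (Fin 2) R).1 = !![0, 1; -1, 0] :=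
      (adjugate_fin_two_of ..).trans (by simp)
    refine (frameHom_smul_covec h quarterTurn 0).trans ?_
    ext i
    simp [inverse, vecMul, dotProduct, covecMatrix]

end Frames

section Transitivity

open Matrix MulAction

variable {ι D : Type*} [Fintype ι] [DecidableEq ι] [Field D] {σ : List (VecCovec ι D)}
  {x y y' : VecCovec ι D}

instance [Infinite D] : Group.IsPerfect (SpecialLinearGroup (Fin 2) D) := by
  obtain ⟨a, ha⟩ := ((Set.toFinite {0, 1, -1}).infinite_compl (α := D)).nonempty
  obtain ⟨ha₀, ha₁, ha₂⟩ : a ≠ 0 ∧ a ≠ 1 ∧ a ≠ -1 := by simpa using ha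
  exact ⟨SL2.commutator_eq_top ha₀ fun h => (sq_eq_one_iff.1 h).elim ha₁ ha₂⟩

variable [Infinite D]

/-- `a` and `ψ` belong to two dual pairs spanning a plane, on which the transvection is an
elementary matrix. -/
lemma exists_transvection_mem_commutator (hσ : Nondegenerate σ) {a ψ : ι → D} (ha : a ∈ vecPerp σ)
    (hψ : ψ ∈ covecPerp σ) (h : ψ ⬝ᵥ a = 0) :
    ∃ g ∈ ⁅stabilizer (SpecialLinearGroup ι D) σ, stabilizer (SpecialLinearGroup ι D) σ⁆,
      ∀ z : VecCovec ι D, g • z = ⟨z.vec + (ψ ⬝ᵥ z.vec) • a, z.covec - (z.covec ⬝ᵥ a) • ψ⟩ := by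
  rcases eq_or_ne a 0 with rfl | ha₀
  · exact ⟨1, one_mem _, fun z => by simp⟩
  rcases eq_or_ne ψ 0 with rfl | hψ₀
  · exact ⟨1, one_mem _, fun z => by simp⟩
  obtain ⟨c, hc, hψc⟩ := hσ.exists_vec hψ hψ₀
  obtain ⟨α, hα, hαa⟩ := hσ.exists_covec ha ha₀
  let x₀ : VecCovec ι D := ⟨a, α - (α ⬝ᵥ c) • ψ⟩
  let x₁ : VecCovec ι D := ⟨c, ψ⟩
  have dual : IsDualFrame ![x₀, x₁] :=
    isDualFrame_pair (by simp [VecCovec.IsNormalized, x₀, h, hαa]) hψc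
      ⟨by simp [x₀, x₁, hψc], h⟩
  have orthogonal (j) : (![x₀, x₁] j).OrthogonalTo σ := by
    rw [VecCovec.orthogonalTo_iff]
    fin_cases j
    · exact ⟨ha, (covecPerp σ).sub_mem hα ((covecPerp σ).smul_mem _ hψ)⟩
    · exact ⟨hc, hψ⟩
  refine ⟨frameHom dual (SpecialLinearGroup.transvection zero_ne_one 1),
    frameHom_mem_commutator dual orthogonal _, fun z => ?_⟩
  ext1
  · rw [VecCovec.smul_vec, coe_frameHom_transvection]
    simp [add_mulVec, vecMulVec_mulVec_eq_smul, x₀, x₁]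
  · rw [VecCovec.smul_covec, ← map_inv, SpecialLinearGroup.transvection_inv,
      coe_frameHom_transvection]
    simp [vecMul_add, vecMul_neg, vecMul_vecMulVec, x₀, x₁, sub_eq_add_neg]

lemma exists_smul_eq_of_vec_eq (hσ : Nondegenerate σ) (hy : y.OrthogonalTo σ)
    (hy₁ : y.IsNormalized) (hy' : y'.OrthogonalTo σ) (hy₁' : y'.IsNormalized)
    (h : y.vec = y'.vec) :
    ∃ g ∈ ⁅stabilizer (SpecialLinearGroup ι D) σ, stabilizer (SpecialLinearGroup ι D) σ⁆,
      g • y = y' := by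
  have value : y.covec ⬝ᵥ y.vec = 1 := hy₁
  have value' : y'.covec ⬝ᵥ y.vec = 1 := h ▸ hy₁'
  obtain ⟨g, hg, action⟩ := exists_transvection_mem_commutator hσ hy.vec_mem
    ((covecPerp σ).sub_mem hy.covec_mem hy'.covec_mem)
    (by rw [sub_dotProduct, value, value', sub_self])
  refine ⟨g, hg, (action y).trans ?_⟩
  ext1
  · simpa [sub_dotProduct, value, value'] using h
  · simp [value]

lemma exists_smul_eq_of_covec_eq (hσ : Nondegenerate σ) (hy : y.OrthogonalTo σ)
    (hy₁ : y.IsNormalized) (hy' : y'.OrthogonalTo σ) (hy₁' : y'.IsNormalized)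
    (h : y.covec = y'.covec) :
    ∃ g ∈ ⁅stabilizer (SpecialLinearGroup ι D) σ, stabilizer (SpecialLinearGroup ι D) σ⁆,
      g • y = y' := by
  have value : y.covec ⬝ᵥ y.vec = 1 := hy₁
  have value' : y.covec ⬝ᵥ y'.vec = 1 := h ▸ hy₁'
  obtain ⟨g, hg, action⟩ := exists_transvection_mem_commutator hσ
    ((vecPerp σ).sub_mem hy'.vec_mem hy.vec_mem) hy.covec_mem
    (by rw [dotProduct_sub, value, value', sub_self])
  refine ⟨g, hg, (action y).trans ?_⟩
  ext1
  · simp [value]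
  · simpa [dotProduct_sub, value, value'] using h

/-- Move the vector of `y` along `a` to a vector on which both covectors take the value `1`. -/
lemma exists_smul_eq_of_covec_ne_zero (hσ : Nondegenerate σ) (hy : y.OrthogonalTo σ)
    (hy₁ : y.IsNormalized) (hy' : y'.OrthogonalTo σ) (hy₁' : y'.IsNormalized) {a : ι → D}
    (ha : a ∈ vecPerp (y :: σ)) (ha' : y'.covec ⬝ᵥ a ≠ 0) :
    ∃ g ∈ ⁅stabilizer (SpecialLinearGroup ι D) σ, stabilizer (SpecialLinearGroup ι D) σ⁆,
      g • y = y' := by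
  obtain ⟨hya, haσ⟩ := List.forall_mem_cons.1 ha
  let w := y.vec + ((1 - y'.covec ⬝ᵥ y.vec) / (y'.covec ⬝ᵥ a)) • a
  have hw : w ∈ vecPerp σ := (vecPerp σ).add_mem hy.vec_mem ((vecPerp σ).smul_mem _ haσ)
  have orthogonal : VecCovec.OrthogonalTo ⟨w, y.covec⟩ σ :=
    VecCovec.orthogonalTo_iff.2 ⟨hw, hy.covec_mem⟩
  have orthogonal' : VecCovec.OrthogonalTo ⟨w, y'.covec⟩ σ :=
    VecCovec.orthogonalTo_iff.2 ⟨hw, hy'.covec_mem⟩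
  have normalized : VecCovec.IsNormalized ⟨w, y.covec⟩ := by
    simpa [VecCovec.IsNormalized, w, hya] using hy₁
  have normalized' : VecCovec.IsNormalized ⟨w, y'.covec⟩ := by
    simp [VecCovec.IsNormalized, w, div_mul_cancel₀ _ ha']
  obtain ⟨g₁, hg₁, move₁⟩ := exists_smul_eq_of_covec_eq hσ hy hy₁ orthogonal normalized rfl
  obtain ⟨g₂, hg₂, move₂⟩ :=
    exists_smul_eq_of_vec_eq hσ orthogonal normalized orthogonal' normalized' rfl
  obtain ⟨g₃, hg₃, move₃⟩ := exists_smul_eq_of_covec_eq hσ orthogonal' normalized' hy' hy₁' rfl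
  exact ⟨g₃ * (g₂ * g₁), mul_mem hg₃ (mul_mem hg₂ hg₁),
    by rw [mul_smul, mul_smul, move₁, move₂, move₃]⟩

/-- If `y'.covec` vanishes on all vectors orthogonal to `y` and `σ`, it does not after adding to
`y.covec` a covector `z.covec` with `z` orthogonal to `y` and `σ`. -/
theorem exists_smul_eq_of_length_lt (hσ : Nondegenerate σ) (hcard : σ.length + 1 < Fintype.card ι)
    (hy : y.OrthogonalTo σ) (hy₁ : y.IsNormalized) (hy' : y'.OrthogonalTo σ)
    (hy₁' : y'.IsNormalized) :
    ∃ g ∈ ⁅stabilizer (SpecialLinearGroup ι D) σ, stabilizer (SpecialLinearGroup ι D) σ⁆,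
      g • y = y' := by
  by_cases! vanish : ∃ a ∈ vecPerp (y :: σ), y'.covec ⬝ᵥ a ≠ 0
  · obtain ⟨a, ha, ha'⟩ := vanish
    exact exists_smul_eq_of_covec_ne_zero hσ hy hy₁ hy' hy₁' ha ha'
  obtain ⟨z, hz, hz₁⟩ := (hσ.cons hy hy₁).exists_orthogonalTo hcard
  obtain ⟨hzy, hzσ⟩ := VecCovec.orthogonalTo_cons.1 hz
  have value : y.covec ⬝ᵥ y.vec = 1 := hy₁
  have value' : y'.covec ⬝ᵥ y'.vec = 1 := hy₁'
  have value_z : z.covec ⬝ᵥ z.vec = 1 := hz₁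
  let sheared : VecCovec ι D := ⟨y.vec, y.covec + z.covec⟩
  have sheared_orthogonal : sheared.OrthogonalTo σ := VecCovec.orthogonalTo_iff.2
    ⟨hy.vec_mem, (covecPerp σ).add_mem hy.covec_mem hzσ.covec_mem⟩
  have sheared_normalized : sheared.IsNormalized := by
    simp [VecCovec.IsNormalized, sheared, value, hzy.1]
  have covec_vec_ne_zero : y'.covec ⬝ᵥ y.vec ≠ 0 := by
    intro h
    have := vanish (y'.vec - (y.covec ⬝ᵥ y'.vec) • y.vec) (List.forall_mem_cons.2
      ⟨by simp [value], (vecPerp σ).sub_mem hy'.vec_mem ((vecPerp σ).smul_mem _ hy.vec_mem)⟩)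
    simp [h, value'] at this
  have difference_mem : y.vec - z.vec ∈ vecPerp (sheared :: σ) := List.forall_mem_cons.2
    ⟨by simp [sheared, value, value_z, hzy.1, hzy.2],
      (vecPerp σ).sub_mem hy.vec_mem hzσ.vec_mem⟩
  obtain ⟨g₁, hg₁, move₁⟩ := exists_smul_eq_of_vec_eq hσ hy hy₁ sheared_orthogonal
    sheared_normalized rfl
  obtain ⟨g₂, hg₂, move₂⟩ := exists_smul_eq_of_covec_ne_zero hσ sheared_orthogonal
    sheared_normalized hy' hy₁' difference_mem (by
      rwa [dotProduct_sub, vanish z.vec hz.vec_mem, sub_zero])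
  exact ⟨g₂ * g₁, mul_mem hg₂ hg₁, by rw [mul_smul, move₁, move₂]⟩

end Transitivity

section StabilizerPairs

open Matrix MulAction

variable {ι : Type*} [Fintype ι] [DecidableEq ι]

lemma mem_stabilizer_cons {Γ P : Type*} [Group Γ] [MulAction Γ P] {g : Γ} {u : P} {τ : List P} :
    g ∈ stabilizer Γ (u :: τ) ↔ g • u = u ∧ g ∈ stabilizer Γ τ :=
  List.cons_eq_cons

lemma stabilizer_inf_stabilizer {Γ P : Type*} [Group Γ] [MulAction Γ P] (τ r : List P) :
    stabilizer Γ τ ⊓ stabilizer Γ r = stabilizer Γ (r ++ τ) := by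
  ext g
  simp only [Subgroup.mem_inf, mem_stabilizer_iff, smul_list_eq_iff, List.forall_mem_append,
    and_comm]

lemma stabilizer_append_cons {Γ P : Type*} [Group Γ] [MulAction Γ P] (r τ : List P) (u : P) :
    stabilizer Γ (r ++ u :: τ) = stabilizer Γ (u :: (r ++ τ)) := by
  ext g
  simp only [mem_stabilizer_iff, smul_list_eq_iff, List.perm_middle.mem_iff]

lemma stabilizer_cons_le {Γ P : Type*} [Group Γ] [MulAction Γ P] (u : P) (τ : List P) :
    stabilizer Γ (u :: τ) ≤ stabilizer Γ τ :=
  fun _ hg => (mem_stabilizer_cons.1 hg).2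

lemma VecCovec.OrthogonalTo.smul_of_mem_stabilizer {R : Type*} [CommRing R]
    {x : VecCovec ι R} {τ : List (VecCovec ι R)} (hx : x.OrthogonalTo τ)
    {g : SpecialLinearGroup ι R} (hg : g ∈ stabilizer (SpecialLinearGroup ι R) τ) :
    (g • x).OrthogonalTo τ := by
  have := hx.smul g
  rwa [mem_stabilizer_iff.1 hg] at this

variable {D : Type*} [Field D] {τ : List (VecCovec ι D)} {u : VecCovec ι D} {i k : ℕ}

lemma isSimplicialPair_simplices (hτ : Nondegenerate τ) (hu : u.OrthogonalTo τ)
    (hu' : u.IsNormalized) :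
    IsSimplicialPair (stabilizer (SpecialLinearGroup ι D) τ)
      (stabilizer (SpecialLinearGroup ι D) (u :: τ)) (simplices τ) (simplices (u :: τ)) where
  le := stabilizer_cons_le u τ
  subset _ _ hs := ((mem_simplices_cons hu hu').1 hs).1
  smul_mem _ _ hg _ hs := smul_mem_simplices hs hg
  smul_mem' _ _ hg _ hs := smul_mem_simplices hs hg
  length_eq _ _ hs := hs.1
  nil_mem := ⟨rfl, by simp, fun t ht => by
    rw [List.sublist_nil.1 ht]
    exact hτ.cons hu hu'⟩
  eraseIdx_mem _ _ hs _ hj := eraseIdx_mem_simplices hs hj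
  eraseIdx_mem' _ _ hs _ hj := eraseIdx_mem_simplices hs hj

variable [Infinite D]

lemma relHomologyVanishes_one_stabilizer {M : Type*} [AddCommGroup M] (hτ : Nondegenerate τ)
    (hcard : τ.length + 1 < Fintype.card ι) (hu : u.OrthogonalTo τ) (hu' : u.IsNormalized) :
    RelHomologyVanishes M (stabilizer (SpecialLinearGroup ι D) τ)
      (stabilizer (SpecialLinearGroup ι D) (u :: τ)) 1 := by
  refine relHomologyVanishes_one_of_commutator fun g hg => ?_
  obtain ⟨t, ht, htu⟩ := exists_smul_eq_of_length_lt hτ hcard (hu.smul_of_mem_stabilizer hg)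
    (hu'.smul g) hu hu'
  exact ⟨t, ht, mem_stabilizer_cons.2
    ⟨by rw [mul_smul, htu], mul_mem (Subgroup.commutator_le_self _ ht) hg⟩⟩

/-- Choose a pair orthogonal to `s` and `τ`, and move it to `u`. -/
lemma exists_smul_mem_simplices_cons (hτ : Nondegenerate τ) (hu : u.OrthogonalTo τ)
    (hu' : u.IsNormalized) (hcard : τ.length + 1 < Fintype.card ι)
    (hi : i + τ.length < Fintype.card ι) {s : List (VecCovec ι D)} (hs : s ∈ simplices τ i) :
    ∃ g ∈ stabilizer (SpecialLinearGroup ι D) τ, g • s ∈ simplices (u :: τ) i := by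
  obtain ⟨x, hx, hx'⟩ := (hs.2.2 s (List.Sublist.refl s)).exists_orthogonalTo
    (by rwa [List.length_append, hs.1])
  obtain ⟨hxs, hxτ⟩ := VecCovec.orthogonalTo_append.1 hx
  obtain ⟨g, hg, rfl⟩ := exists_smul_eq_of_length_lt hτ hcard hxτ hx' hu hu'
  have hgτ := Subgroup.commutator_le_self _ hg
  refine ⟨g, hgτ, (mem_simplices_cons hu hu').2 ⟨smul_mem_simplices hs hgτ, fun y hy => ?_⟩⟩
  obtain ⟨z, hz, rfl⟩ := mem_smul_list.1 hy
  exact (hxs z hz).symm.smul g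

lemma exists_mem_stabilizer_cons_smul_eq (hu : u.OrthogonalTo τ) (hu' : u.IsNormalized)
    (hi : i + τ.length + 1 < Fintype.card ι) {s : List (VecCovec ι D)}
    (hs : s ∈ simplices (u :: τ) i) {g : SpecialLinearGroup ι D}
    (hg : g ∈ stabilizer (SpecialLinearGroup ι D) τ) (hgs : g • s ∈ simplices (u :: τ) i) :
    ∃ g' ∈ stabilizer (SpecialLinearGroup ι D) (u :: τ), g' • s = g • s := by
  obtain ⟨-, hsu⟩ := (mem_simplices_cons hu hu').1 hs
  obtain ⟨hgs, hgsu⟩ := (mem_simplices_cons hu hu').1 hgs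
  have nondegenerate := hgs.2.2 (g • s) (List.Sublist.refl _)
  have orthogonal : u.OrthogonalTo (g • s ++ τ) :=
    VecCovec.orthogonalTo_append.2 ⟨fun x hx => (hgsu x hx).symm, hu⟩
  have orthogonal' : (g • u).OrthogonalTo (g • s ++ τ) := VecCovec.orthogonalTo_append.2
    ⟨VecCovec.OrthogonalTo.smul (fun x hx => (hsu x hx).symm) g, hu.smul_of_mem_stabilizer hg⟩
  obtain ⟨h, hh, hhu⟩ := exists_smul_eq_of_length_lt nondegenerate
    (by rwa [List.length_append, hgs.1]) orthogonal' (hu'.smul g) orthogonal hu'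
  have h_fix := Subgroup.commutator_le_self _ hh
  rw [← stabilizer_inf_stabilizer] at h_fix
  exact ⟨h * g, mem_stabilizer_cons.2 ⟨by rw [mul_smul, hhu], mul_mem h_fix.1 hg⟩,
    by rw [mul_smul]; exact h_fix.2⟩

/-- The quarter turn of the plane spanned by `x` and `u` exchanges their stabilizers, and it is a
product of commutators because `SL₂` is perfect. -/
lemma relHomologyMapVanishes_stabilizer (M : Type*) [AddCommGroup M] {x : VecCovec ι D}
    (hx : x.OrthogonalTo τ) (hx' : x.IsNormalized) (hu : u.OrthogonalTo τ) (hu' : u.IsNormalized)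
    (hxu : x.Orthogonal u) (k : ℕ) :
    RelHomologyMapVanishes M
      (stabilizer (SpecialLinearGroup ι D) τ ⊓ stabilizer (SpecialLinearGroup ι D) [x])
      (stabilizer (SpecialLinearGroup ι D) (u :: τ) ⊓ stabilizer (SpecialLinearGroup ι D) [x])
      (stabilizer (SpecialLinearGroup ι D) τ) (stabilizer (SpecialLinearGroup ι D) (u :: τ))
      (k + 1) := by
  have frame : IsDualFrame ![u, x] := isDualFrame_pair hu' hx' hxu.symm
  have fixes := frameHom_mem_stabilizer frame (σ := τ) (by
    intro j
    fin_cases j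
    exacts [hu, hx])
  refine relHomologyMapVanishes_of_mem_commutator (η := frameHom frame) inf_le_left
    (inf_le_left.trans (stabilizer_cons_le u τ)) (stabilizer_cons_le u τ) fixes ?_
    (Group.IsPerfect.mem_commutator (g := quarterTurn)) ?_ k
  · rintro A h ⟨hhu, hhx⟩
    refine mul_frameHom_of_smul_eq frame (fun j => ?_) A
    fin_cases j
    exacts [(mem_stabilizer_cons.1 hhu).1, (mem_stabilizer_cons.1 hhx).1]
  · rintro h ⟨hhτ, hhx⟩
    have hhx : h • x = x := (mem_stabilizer_cons.1 hhx).1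
    refine mem_stabilizer_cons.2
      ⟨?_, mul_mem (mul_mem (inv_mem (fixes quarterTurn)) hhτ) (fixes quarterTurn)⟩
    rw [mul_smul, mul_smul, frameHom_quarterTurn_smul, hhx, inv_smul_eq_iff,
      frameHom_quarterTurn_smul]

theorem relHomologyVanishes_stabilizer (M : Type*) [AddCommGroup M] (hk : 1 ≤ k)
    (hcard : τ.length + 2 * k ≤ Fintype.card ι) (hτ : Nondegenerate τ) (hu : u.OrthogonalTo τ)
    (hu' : u.IsNormalized) :
    RelHomologyVanishes M (stabilizer (SpecialLinearGroup ι D) τ)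
      (stabilizer (SpecialLinearGroup ι D) (u :: τ)) k := by
  induction k using Nat.strong_induction_on generalizing τ with
  | _ k ih =>
  obtain rfl | ⟨k, rfl⟩ : k = 1 ∨ ∃ k', k = k' + 2 := by
    obtain _ | _ | k := k
    exacts [absurd hk (by lia), .inl rfl, .inr ⟨k, rfl⟩]
  · exact relHomologyVanishes_one_stabilizer hτ (by lia) hu hu'
  refine (isSimplicialPair_simplices hτ hu hu').relHomologyVanishes
    (fun i hi s hs => exists_smul_mem_simplices_cons hτ hu hu' (by lia) (by lia) hs)
    (fun i hi s hs g hg hgs => exists_mem_stabilizer_cons_smul_eq hu hu' (by lia) hs hg hgs)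
    (fun i hi => hasCones_simplices hτ (by lia))
    (fun i hi => hasCones_simplices (hτ.cons hu hu') (by rw [List.length_cons]; lia)) ?_ ?_
  · intro i j hij r hr
    obtain ⟨hr, hru⟩ := (mem_simplices_cons hu hu').1 hr
    rw [stabilizer_inf_stabilizer, stabilizer_inf_stabilizer, stabilizer_append_cons]
    refine ih (j + 1) (by lia) (by lia) ?_ (hr.2.2 r (List.Sublist.refl r))
      (VecCovec.orthogonalTo_append.2 ⟨fun x hx => (hru x hx).symm, hu⟩)
    rw [List.length_append, hr.1]
    lia
  · intro r hr
    obtain ⟨hr, hru⟩ := (mem_simplices_cons hu hu').1 hr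
    obtain ⟨x, rfl⟩ := List.length_eq_one_iff.1 hr.1
    obtain ⟨hx, hx'⟩ := hr.2.1 x (List.mem_singleton_self x)
    exact relHomologyMapVanishes_stabilizer M hx hx' hu hu' (hru x (List.mem_singleton_self x)) _

end StabilizerPairs

section BarComplex

open Finsupp

variable {R : Type} [CommRing R] {Γ Γ' : Type*} [Group Γ] [Group Γ']

lemma faces_eq_sum {α M : Type*} [AddCommGroup M] (l : List α) (m : M) :
    faces l m = ∑ i : Fin l.length, single (l.eraseIdx i) ((-1 : ℤ) ^ (i : ℕ) • m) := by
  induction l with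
  | nil => rfl
  | cons a l ih =>
    rw [faces, LinearMap.sub_apply, LinearMap.comp_apply, ih]
    simp only [List.length_cons, Fin.sum_univ_succ, map_sum, consChain_single, lsingle_apply]
    simp [pow_succ, sub_eq_add_neg, single_neg]

/-- The inhomogeneous coordinates `(a₀⁻¹ a₁, …, aₖ₋₁⁻¹ aₖ)` of a simplex `(a₀, …, aₖ)`. -/
def ratios (k : ℕ) (l : List Γ) : Fin k → Γ :=
  fun j => (l.getD j 1)⁻¹ * l.getD (j + 1) 1

lemma ratios_ofFn {k : ℕ} (a : Fin (k + 1) → Γ) (j : Fin k) :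
    ratios k (List.ofFn a) j = (a j.castSucc)⁻¹ * a j.succ := by
  rw [ratios, List.getD_eq_getElem _ _ (by simp), List.getD_eq_getElem _ _ (by simp),
    List.getElem_ofFn, List.getElem_ofFn]
  rfl

/-- From homogeneous to inhomogeneous chains. -/
noncomputable def inhomogenize (R : Type) [CommRing R] (k : ℕ) :
    (List Γ →₀ R) →ₗ[ℤ] ((Fin k → Γ) →₀ R) :=
  lmapDomain R ℤ (ratios k)

/-- From inhomogeneous to homogeneous chains: `(g₁, …, gₖ) ↦ (1, g₁, g₁ g₂, …, g₁ ⋯ gₖ)`. -/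
noncomputable def homogenize (R : Type) [CommRing R] (k : ℕ) :
    ((Fin k → Γ) →₀ R) →ₗ[ℤ] (List Γ →₀ R) :=
  lmapDomain R ℤ fun c => List.ofFn (Fin.partialProd c)

@[simp]
lemma inhomogenize_single (k : ℕ) (l : List Γ) (r : R) :
    inhomogenize R k (single l r) = single (ratios k l) r := by
  simp [inhomogenize]

@[simp]
lemma homogenize_single (k : ℕ) (c : Fin k → Γ) (r : R) :
    homogenize R k (single c r) = single (List.ofFn (Fin.partialProd c)) r := by
  simp [homogenize]

lemma barDiff_single (k : ℕ) (c : Fin (k + 1) → Γ) (r : R) : barDiff R Γ k (single c r) =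
    single (fun j : Fin k => c j.succ) r
      + ∑ i : Fin k, single
          (fun j : Fin k => if (j : ℕ) < (i : ℕ) then c (Fin.castSucc j)
            else if (j : ℕ) = (i : ℕ) then c (Fin.castSucc i) * c i.succ
            else c j.succ) ((-1 : ℤ) ^ ((i : ℕ) + 1) • r)
      + single (fun j : Fin k => c (Fin.castSucc j)) ((-1 : ℤ) ^ (k + 1) • r) := by
  rw [barDiff, lift_apply, sum_single_index (by simp)]
  simp [smul_add, Finset.smul_sum, mul_comm r]

lemma ratios_eraseIdx_zero {k : ℕ} (l : List Γ) :
    ratios k (l.eraseIdx 0) = fun j => ratios (k + 1) l j.succ := by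
  funext j
  simp [ratios, List.getD_eq_getElem?_getD]

lemma ratios_eraseIdx_succ {k : ℕ} (l : List Γ) (i : Fin k) :
    ratios k (l.eraseIdx (i + 1)) = fun j : Fin k =>
      if (j : ℕ) < (i : ℕ) then ratios (k + 1) l j.castSucc
      else if (j : ℕ) = (i : ℕ) then ratios (k + 1) l i.castSucc * ratios (k + 1) l i.succ
      else ratios (k + 1) l j.succ := by
  funext j
  simp only [ratios, List.getD_eq_getElem?_getD, List.getElem?_eraseIdx, Fin.val_castSucc,
    Fin.val_succ]
  rcases lt_trichotomy (j : ℕ) (i : ℕ) with h | h | h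
  · rw [if_pos h, if_pos (by lia), if_pos (by lia)]
  · rw [if_pos (by lia), if_neg (by lia), if_neg (by lia), if_pos h, h]
    group
  · rw [if_neg (by lia), if_neg (by lia), if_neg (by lia), if_neg (by lia)]

lemma ratios_eraseIdx_last {k : ℕ} (l : List Γ) :
    ratios k (l.eraseIdx (k + 1)) = fun j => ratios (k + 1) l j.castSucc := by
  funext j
  simp only [ratios, List.getD_eq_getElem?_getD, List.getElem?_eraseIdx, Fin.val_castSucc]
  rw [if_pos (by lia), if_pos (by lia)]

lemma barDiff_inhomogenize {k : ℕ} {x : List Γ →₀ R} (hx : x ∈ listChains R Set.univ (k + 2)) :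
    barDiff R Γ k (inhomogenize R (k + 1) x) = inhomogenize R k (boundary x) := by
  refine eq_of_mem_chainsOn ((barDiff R Γ k).restrictScalars ℤ ∘ₗ inhomogenize R (k + 1))
    (inhomogenize R k ∘ₗ boundary) ?_ hx
  rintro l ⟨hl, -⟩ r -
  simp only [LinearMap.comp_apply, LinearMap.restrictScalars_apply, inhomogenize_single,
    boundary_single, faces_eq_sum, map_sum]
  rw [barDiff_single, ← Equiv.sum_comp (finCongr hl.symm), Fin.sum_univ_succ,
    Fin.sum_univ_castSucc, ← add_assoc]
  simp only [finCongr_apply, Fin.val_cast, Fin.val_zero, Fin.val_castSucc, Fin.val_succ,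
    Fin.val_last, ratios_eraseIdx_zero, ratios_eraseIdx_succ, ratios_eraseIdx_last, pow_zero,
    one_smul]

lemma inhomogenize_homogenize (k : ℕ) (z : (Fin k → Γ) →₀ R) :
    inhomogenize R k (homogenize R k z) = z := by
  induction z using Finsupp.induction_linear with
  | zero => simp
  | add z z' hz hz' => rw [map_add, map_add, hz, hz']
  | single c r =>
    rw [homogenize_single, inhomogenize_single]
    congr 1
    exact funext fun j => (ratios_ofFn _ j).trans (Fin.partialProd_right_inv c j)

lemma exists_ofFn_eq_of_mem_listsIn {α : Type*} {G : Set α} {j : ℕ} {l : List α}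
    (hl : l ∈ listsIn G j) : ∃ a : Fin j → α, List.ofFn a = l := by
  obtain ⟨rfl, -⟩ := hl
  exact ⟨l.get, List.ofFn_get l⟩

lemma inhomogenize_leftTranslate {k : ℕ} (g : Γ) {x : List Γ →₀ R}
    (hx : x ∈ listChains R Set.univ (k + 1)) :
    inhomogenize R k (leftTranslate g x) = inhomogenize R k x := by
  refine eq_of_mem_chainsOn (inhomogenize R k ∘ₗ leftTranslate g) (inhomogenize R k) ?_ hx
  rintro l hl r -
  obtain ⟨a, rfl⟩ := exists_ofFn_eq_of_mem_listsIn hl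
  have ratios_mul : ratios k (List.ofFn ((g * ·) ∘ a)) = ratios k (List.ofFn a) := by
    funext j
    simp only [ratios_ofFn, Function.comp_apply]
    group
  rw [LinearMap.comp_apply, mapChain_single, List.map_ofFn, inhomogenize_single,
    inhomogenize_single, ratios_mul]

lemma inv_mul_eq_partialProd_ratios {k : ℕ} (a : Fin (k + 1) → Γ) :
    ((a 0)⁻¹ * ·) ∘ a = Fin.partialProd (ratios k (List.ofFn a)) := by
  rw [funext (ratios_ofFn a), ← inv_smul_eq_iff.2 (Fin.partialProd_left_inv a).symm]
  rfl

lemma homogenize_inhomogenize_sub_mem (H : Subgroup Γ) {k : ℕ} {x : List Γ →₀ R}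
    (hx : x ∈ listChains R Set.univ (k + 1)) :
    homogenize R k (inhomogenize R k x) - x ∈ groupNull R ⊤ H (k + 1) := by
  refine map_mem_of_mem_chainsOn (homogenize R k ∘ₗ inhomogenize R k - LinearMap.id) ?_ hx
  rintro l hl r -
  obtain ⟨a, rfl⟩ := exists_ofFn_eq_of_mem_listsIn hl
  rw [LinearMap.sub_apply, LinearMap.comp_apply, inhomogenize_single, homogenize_single,
    ← inv_mul_eq_partialProd_ratios, ← List.map_ofFn, ← mapChain_single]
  exact translate_sub_mem_nullChains (ρ := leftTranslate) (Subgroup.mem_top _)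
    (single_mem_chainsOn (by simpa using hl) trivial)

lemma homogenize_mem_listChains (k : ℕ) (z : (Fin k → Γ) →₀ R) :
    homogenize R k z ∈ listChains R Set.univ (k + 1) := by
  induction z using Finsupp.induction_linear with
  | zero => simp
  | add z z' hz hz' => rw [map_add]; exact Submodule.add_mem _ hz hz'
  | single c r =>
    rw [homogenize_single]
    exact single_mem_chainsOn ⟨by simp, by simp⟩ trivial

lemma barDiff_barDiff (k : ℕ) (z : (Fin (k + 2) → Γ) →₀ R) :
    barDiff R Γ k (barDiff R Γ (k + 1) z) = 0 := by
  have hz := homogenize_mem_listChains (k + 2) z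
  rw [← inhomogenize_homogenize (k + 2) z, barDiff_inhomogenize hz,
    barDiff_inhomogenize (boundary_mem_listChains hz), boundary_boundary, map_zero]

@[simp]
lemma barMap_single (φ : Γ' → Γ) (k : ℕ) (c : Fin k → Γ') (r : R) :
    barMap R φ k (single c r) = single (φ ∘ c) r := by
  simp [barMap]

lemma barMap_injective {φ : Γ' → Γ} (hφ : Function.Injective φ) (k : ℕ) :
    Function.Injective (barMap R φ k) :=
  mapDomain_injective hφ.comp_left

lemma partialProd_comp (φ : Γ' →* Γ) {k : ℕ} (c : Fin k → Γ') :
    Fin.partialProd (φ ∘ c) = φ ∘ Fin.partialProd c := by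
  funext i
  induction i using Fin.induction with
  | zero => simp
  | succ i ih =>
    simp only [Function.comp_apply] at ih ⊢
    rw [Fin.partialProd_succ, Fin.partialProd_succ, ih, map_mul, Function.comp_apply]

lemma homogenize_barMap (φ : Γ' →* Γ) (k : ℕ) (z : (Fin k → Γ') →₀ R) :
    homogenize R k (barMap R φ k z) = mapChain φ (homogenize R k z) := by
  induction z using Finsupp.induction_linear with
  | zero => simp
  | add z z' hz hz' => simp only [map_add, hz, hz']
  | single c r =>
    rw [barMap_single, homogenize_single, homogenize_single, mapChain_single, List.map_ofFn,
      partialProd_comp]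

lemma inhomogenize_mapChain (φ : Γ' →* Γ) (k : ℕ) (x : List Γ' →₀ R) :
    inhomogenize R k (mapChain φ x) = barMap R φ k (inhomogenize R k x) := by
  induction x using Finsupp.induction_linear with
  | zero => simp
  | add x x' hx hx' => simp only [map_add, hx, hx']
  | single l r =>
    have getD_map (i : ℕ) : (l.map φ).getD i 1 = φ (l.getD i 1) := by
      simpa only [map_one] using List.getD_map l (1 : Γ') φ (n := i)
    rw [mapChain_single, inhomogenize_single, inhomogenize_single, barMap_single]
    congr 1
    funext j
    simp only [ratios, getD_map, Function.comp_apply, map_mul, map_inv]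

lemma barDiff_barMap (φ : Γ' →* Γ) (k : ℕ) (z : (Fin (k + 1) → Γ') →₀ R) :
    barDiff R Γ k (barMap R φ (k + 1) z) = barMap R φ k (barDiff R Γ' k z) := by
  have hz := homogenize_mem_listChains (k + 1) z
  rw [← inhomogenize_homogenize (k + 1) z, ← inhomogenize_mapChain, barDiff_inhomogenize hz,
    barDiff_inhomogenize (mapChain_mem_listChains (by simp) hz), boundary_mapChain,
    inhomogenize_mapChain]

lemma inhomogenize_mem_range_barMap (φ : Γ' →* Γ) {k : ℕ} {x : List Γ →₀ R}
    (hx : x ∈ groupNull R ⊤ φ.range (k + 1)) :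
    inhomogenize R k x ∈ LinearMap.range ((barMap R φ k).restrictScalars ℤ) := by
  refine map_mem_of_mem_nullChains (inhomogenize R k) (fun g _ x hx => ?_) (fun x hx => ?_) hx
  · rw [Subgroup.coe_top] at hx
    rw [inhomogenize_leftTranslate g hx, sub_self]
    exact Submodule.zero_mem _
  · refine map_mem_of_mem_chainsOn (inhomogenize R k) ?_ hx
    rintro l ⟨-, hl⟩ r -
    obtain ⟨l, rfl⟩ : l ∈ Set.range (List.map φ) := by
      rw [Set.range_list_map]
      exact hl
    exact ⟨single (ratios k l) r, by
      rw [LinearMap.restrictScalars_apply, ← inhomogenize_single, ← inhomogenize_mapChain,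
        mapChain_single]⟩

lemma mem_groupNull_of_inhomogenize_mem (φ : Γ' →* Γ) {k : ℕ} {x : List Γ →₀ R}
    (hx : x ∈ listChains R Set.univ (k + 1))
    (h : inhomogenize R k x ∈ LinearMap.range (barMap R φ k)) :
    x ∈ groupNull R ⊤ φ.range (k + 1) := by
  obtain ⟨z, hz⟩ := h
  have image_mem : homogenize R k (inhomogenize R k x) ∈ groupNull R ⊤ φ.range (k + 1) := by
    rw [← hz, homogenize_barMap]
    exact mem_nullChains_of_mem
      (mapChain_mem_listChains (fun a _ => φ.mem_range.2 ⟨a, rfl⟩) (homogenize_mem_listChains k z))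
  simpa using sub_mem image_mem (homogenize_inhomogenize_sub_mem φ.range hx)

lemma exists_sub_barDiff_mem_range_barMap (φ : Γ' →* Γ) {k : ℕ}
    (h : RelHomologyVanishes R ⊤ φ.range (k + 1)) {z : (Fin (k + 1) → Γ) →₀ R}
    (hz : barDiff R Γ k z ∈ LinearMap.range (barMap R φ k)) :
    ∃ w, z - barDiff R Γ (k + 1) w ∈ LinearMap.range (barMap R φ (k + 1)) := by
  rw [RelHomologyVanishes, Subgroup.coe_top] at h
  have hx := homogenize_mem_listChains (k + 1) z
  obtain ⟨y, hy, hxy⟩ := h _ hx (mem_groupNull_of_inhomogenize_mem φ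
    (boundary_mem_listChains hx) (by rwa [← barDiff_inhomogenize hx, inhomogenize_homogenize]))
  refine ⟨inhomogenize R (k + 2) y, ?_⟩
  rw [barDiff_inhomogenize hy, ← inhomogenize_homogenize (k + 1) z, ← map_sub]
  exact inhomogenize_mem_range_barMap φ hxy

theorem barInduced_of_relHomologyVanishes {φ : Γ' →* Γ} (hφ : Function.Injective φ) {k : ℕ}
    (h : RelHomologyVanishes R ⊤ φ.range (k + 1)) :
    BarInducedSurj R φ (k + 1) ∧ BarInducedInj R φ k := by
  constructor
  · intro z (hz : barDiff R Γ k z = 0)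
    obtain ⟨w, y, hy⟩ := exists_sub_barDiff_mem_range_barMap φ h
      (hz ▸ Submodule.zero_mem (LinearMap.range (barMap R φ k)))
    refine ⟨y, barMap_injective hφ k ?_, w, ?_⟩
    · rw [← barDiff_barMap, hy, map_sub, hz, barDiff_barDiff, sub_zero, map_zero]
    · rw [hy, sub_sub_cancel]
  · rintro c - ⟨z, hz⟩
    obtain ⟨w, y, hy⟩ := exists_sub_barDiff_mem_range_barMap φ h ⟨c, hz.symm⟩
    refine ⟨y, barMap_injective hφ k ?_⟩
    rw [← barDiff_barMap, hy, map_sub, hz, barDiff_barDiff, sub_zero]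

end BarComplex

section BlockEmbedding

open Matrix MulAction

lemma VecCovec.smul_eq_iff {ι R : Type*} [Fintype ι] [DecidableEq ι] [CommRing R]
    {g : SpecialLinearGroup ι R} {x y : VecCovec ι R} :
    g • x = y ↔ g.1 *ᵥ x.vec = y.vec ∧ y.covec ᵥ* g.1 = x.covec := by
  rw [VecCovec.ext_iff, smul_vec, smul_covec]
  refine and_congr_right fun _ => ⟨?_, ?_⟩ <;> rintro h <;> rw [← h, vecMul_vecMul]
  · rw [coe_inv_mul_coe, vecMul_one]
  · rw [coe_mul_coe_inv, vecMul_one]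

variable {D : Type} [Field D] {n : ℕ}

/-- The last standard basis vector together with its dual covector: the stabilizer of this pair
is the image of the block embedding. -/
def lastPair (D : Type) [Field D] (n : ℕ) : VecCovec (Fin (n + 1)) D :=
  ⟨Pi.single (Fin.last n) 1, Pi.single (Fin.last n) 1⟩

/-- The block embedding as a group homomorphism. -/
noncomputable def slHom (D : Type) [Field D] (n : ℕ) :
    SpecialLinearGroup (Fin n) D →* SpecialLinearGroup (Fin (n + 1)) D :=
  MonoidHom.mk' (slEmb D n) fun A B => Subtype.ext (by
    change submatrix _ _ _ = submatrix _ _ _ * submatrix _ _ _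
    rw [submatrix_mul_equiv, fromBlocks_multiply]
    simp)

lemma coe_slHom (A : SpecialLinearGroup (Fin n) D) : (slHom D n A).1 =
    reindex finSumFinEquiv finSumFinEquiv (fromBlocks A.1 0 0 (1 : Matrix (Fin 1) (Fin 1) D)) :=
  rfl

lemma slHom_injective : Function.Injective (slHom D n) := fun A B h => by
  have blocks_eq := congrArg Subtype.val h
  rw [coe_slHom, coe_slHom] at blocks_eq
  exact Subtype.ext (fromBlocks_inj.1 ((reindex _ _).injective blocks_eq)).1

lemma slHom_smul_lastPair (A : SpecialLinearGroup (Fin n) D) :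
    slHom D n A • lastPair D n = lastPair D n := by
  refine VecCovec.smul_eq_iff.2 ⟨?_, ?_⟩ <;> ext i <;> induction i using Fin.lastCases <;>
    simp [lastPair, coe_slHom]

lemma exists_slHom_eq_of_smul_lastPair_eq {g : SpecialLinearGroup (Fin (n + 1)) D}
    (hg : g • lastPair D n = lastPair D n) : ∃ A, slHom D n A = g := by
  obtain ⟨col_last, row_last⟩ := VecCovec.smul_eq_iff.1 hg
  have col_entry (i) : g.1 i (Fin.last n) = Pi.single (M := fun _ => D) (Fin.last n) 1 i := by
    simpa [lastPair] using congrFun col_last i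
  have row_entry (j) : g.1 (Fin.last n) j = Pi.single (M := fun _ => D) (Fin.last n) 1 j := by
    simpa [lastPair] using congrFun row_last j
  let B := (reindex finSumFinEquiv finSumFinEquiv).symm g.1
  have blocks_eq : fromBlocks B.toBlocks₁₁ 0 0 1 = B := by
    ext (i | i) (j | j)
    · rfl
    · rw [Subsingleton.elim j 0]
      exact ((col_entry i.castSucc).trans (by simp)).symm
    · rw [Subsingleton.elim i 0]
      exact ((row_entry j.castSucc).trans (by simp)).symm
    · rw [Subsingleton.elim i 0, Subsingleton.elim j 0]
      exact ((col_entry (Fin.last n)).trans (by simp)).symm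
  have reindex_eq : reindex finSumFinEquiv finSumFinEquiv (fromBlocks B.toBlocks₁₁ 0 0 1) = g.1 :=
    (congrArg _ blocks_eq).trans (Equiv.apply_symm_apply _ _)
  have det_eq : B.toBlocks₁₁.det = 1 := by
    simpa [g.2] using congrArg det reindex_eq
  exact ⟨⟨B.toBlocks₁₁, det_eq⟩, Subtype.ext reindex_eq⟩

lemma range_slHom :
    (slHom D n).range = stabilizer (SpecialLinearGroup (Fin (n + 1)) D) [lastPair D n] := by
  ext g
  rw [mem_stabilizer_cons]
  refine ⟨?_, fun hg => exists_slHom_eq_of_smul_lastPair_eq hg.1⟩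
  rintro ⟨A, rfl⟩
  exact ⟨slHom_smul_lastPair A, rfl⟩

end BlockEmbedding

theorem statement0_general (R : Type) [CommRing R] (D : Type) [Field D] [Infinite D] (k n : ℕ)
    (hk : 1 ≤ k) (hkn : 2 * k ≤ n + 1) :
    BarInducedSurj R (slEmb D n) k ∧ BarInducedInj R (slEmb D n) (k - 1) := by
  obtain ⟨k, rfl⟩ : ∃ k', k = k' + 1 := ⟨k - 1, by lia⟩
  have vanishes := relHomologyVanishes_stabilizer R (τ := []) (u := lastPair D n) hk
    (by simpa using hkn) nondegenerate_nil (by simp [VecCovec.OrthogonalTo])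
    (by simp [VecCovec.IsNormalized, lastPair])
  have stabilizer_nil : MulAction.stabilizer (Matrix.SpecialLinearGroup (Fin (n + 1)) D)
      ([] : List (VecCovec (Fin (n + 1)) D)) = ⊤ := eq_top_iff.2 fun _ _ => rfl
  rw [stabilizer_nil, ← range_slHom] at vanishes
  exact barInduced_of_relHomologyVanishes slHom_injective vanishes

/-- Let `D` be an infinite field and let `k ≥ 1` and `n ≥ 1` satisfy
`n ≥ 2k − 1`.  Then the relative integral group homology `H_k(SL_{n+1}(D), SL_n(D); ℤ)`
vanishes; equivalently, the map `H_k(SL_n(D); ℤ) → H_k(SL_{n+1}(D); ℤ)` induced by the block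
embedding `A ↦ diag(A, 1)` is surjective and the induced map
`H_{k−1}(SL_n(D); ℤ) → H_{k−1}(SL_{n+1}(D); ℤ)` is injective. -/
theorem statement0 (D : Type) [Field D] [Infinite D] (k n : ℕ)
    (hk : 1 ≤ k) (hn : 1 ≤ n) (hkn : 2 * k ≤ n + 1) :
    BarInducedSurj ℤ (slEmb D n) k ∧ BarInducedInj ℤ (slEmb D n) (k - 1) :=
  statement0_general ℤ D k n hk hkn

end Stmt0
end

section
/- The abelianization of Γ (equivalently, H_1(Γ; Z)) is isomorphic to the kernel of the linear map 𝒟 : (Z/N)³ → (Z/N)^q given by 𝒟(x₁, x₂, x₃) = (δ₁(j)x₁ + δ₂(j)x₂ + δ₃(j)x₃)_{j=1,…,q}. In particular, Γ is a perfect group if and only if 𝒟 is injective. -/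
namespace Stmt5

/-- The relators of the presentation
`Γ = ⟨σ₁, σ₂, σ₃ ∣ σᵢ^N = 1 (i = 1,2,3), σ₁^{δ₁(j)} σ₂^{δ₂(j)} σ₃^{δ₃(j)} = 1 (0 ≤ j ≤ q)⟩`,
where `N = q² + q + 1` and `δ i : Fin (q+1) → ZMod N` are the three ordered difference sets
(here exponentiation by an element `δ ∈ ZMod N` means exponentiation by the integer
representative `δ.val ∈ {0, …, N-1}`, which is well defined modulo the relation `σᵢ^N = 1`).
The generators `σ₁, σ₂, σ₃` correspond to `0, 1, 2 : Fin 3`. -/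
def singerRels (q : ℕ) (δ : Fin 3 → Fin (q + 1) → ZMod (q ^ 2 + q + 1)) :
    Set (FreeGroup (Fin 3)) :=
  {r | (∃ i : Fin 3, r = FreeGroup.of i ^ (q ^ 2 + q + 1)) ∨
    (∃ j : Fin (q + 1),
      r = FreeGroup.of 0 ^ (δ 0 j).val * FreeGroup.of 1 ^ (δ 1 j).val *
        FreeGroup.of 2 ^ (δ 2 j).val)}

/-- The panel-regular `Ã₂`-lattice
`Γ = ⟨σ₁, σ₂, σ₃ ∣ σᵢ^N = 1, σ₁^{δ₁(j)} σ₂^{δ₂(j)} σ₃^{δ₃(j)} = 1 for all j⟩`. -/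
def SingerLattice (q : ℕ) (δ : Fin 3 → Fin (q + 1) → ZMod (q ^ 2 + q + 1)) :=
  PresentedGroup (singerRels q δ)

instance (q : ℕ) (δ : Fin 3 → Fin (q + 1) → ZMod (q ^ 2 + q + 1)) :
    Group (SingerLattice q δ) := by
  unfold SingerLattice; infer_instance

/-- The linear map `𝒟 : (ZMod N)³ → (ZMod N)^q` given by
`𝒟(x₁, x₂, x₃) = (δ₁(j)x₁ + δ₂(j)x₂ + δ₃(j)x₃)_{j = 1, …, q}`. -/
noncomputable def diffMap (q : ℕ) (δ : Fin 3 → Fin (q + 1) → ZMod (q ^ 2 + q + 1)) :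
    (Fin 3 → ZMod (q ^ 2 + q + 1)) →ₗ[ZMod (q ^ 2 + q + 1)] (Fin q → ZMod (q ^ 2 + q + 1)) :=
  Matrix.mulVecLin (Matrix.of fun (j : Fin q) (i : Fin 3) => δ i j.succ)

/-- `Δ ⊆ ZMod N` is a planar difference set of order `q` if it has `q + 1` elements and every
nonzero element of `ZMod N` is uniquely a difference of two elements of `Δ`. -/
def IsPlanarDifferenceSet (q : ℕ) (Δ : Set (ZMod (q ^ 2 + q + 1))) : Prop :=
  Δ.ncard = q + 1 ∧ ∀ x : ZMod (q ^ 2 + q + 1), x ≠ 0 →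
    ∃! de : ZMod (q ^ 2 + q + 1) × ZMod (q ^ 2 + q + 1),
      (de.1 ∈ Δ ∧ de.2 ∈ Δ) ∧ de.1 - de.2 = x

/-!
The abelianization `A` of `Γ` is finitely generated of exponent dividing `N`, hence finite, hence
(noncanonically) isomorphic to its dual `Hom(A, ℤ/N) = Hom(Γ, ℤ/N)`.  A homomorphism `Γ → ℤ/N` is a
triple `(x₁, x₂, x₃)` killed by the relators: `σᵢ ^ N` imposes nothing, and the mixed relator of
index `j` is the `j`-th coordinate of `𝒟 x = 0`, which is vacuous for `j = 0`.
-/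

section Duality

theorem hasEnoughRootsOfUnity_multiplicative_zmod (n : ℕ) [NeZero n] :
    HasEnoughRootsOfUnity (Multiplicative (ZMod n)) n where
  prim := ⟨Multiplicative.ofAdd 1, by
    rw [IsPrimitiveRoot.iff_orderOf, orderOf_ofAdd_eq_addOrderOf, ZMod.addOrderOf_one]⟩
  cyc := by
    have : IsCyclic (Multiplicative (ZMod n))ˣ :=
      isCyclic_of_surjective (toUnits (G := Multiplicative (ZMod n))) toUnits.surjective
    infer_instance

theorem finite_of_fg_of_exponent_dvd {A : Type*} [CommGroup A] [Group.FG A] {n : ℕ} [NeZero n]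
    (h : Monoid.exponent A ∣ n) : Finite A :=
  CommGroup.finite_of_fg_isMulTorsion A <| ExponentExists.isMulTorsion <|
    Monoid.exponent_ne_zero.mp <| ne_zero_of_dvd_ne_zero (NeZero.ne n) h

theorem nonempty_mulEquiv_monoidHom_zmod {A : Type*} [CommGroup A] [Group.FG A] {n : ℕ} [NeZero n]
    (h : Monoid.exponent A ∣ n) : Nonempty (A ≃* (A →* Multiplicative (ZMod n))) := by
  have : Finite A := finite_of_fg_of_exponent_dvd h
  have := hasEnoughRootsOfUnity_multiplicative_zmod n
  have : HasEnoughRootsOfUnity (Multiplicative (ZMod n)) (Monoid.exponent A) := .of_dvd _ h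
  obtain ⟨e⟩ := CommGroup.monoidHom_mulEquiv_of_hasEnoughRootsOfUnity A (Multiplicative (ZMod n))
  exact ⟨e.symm.trans MonoidHom.toHomUnitsMulEquiv.symm⟩

/-- The universal property `Hom(G, A) ≃ Hom(Gᵃᵇ, A)` as an isomorphism of groups. -/
def abelianizationLiftMulEquiv (G A : Type*) [Group G] [CommGroup A] :
    (G →* A) ≃* (Abelianization G →* A) where
  __ := Abelianization.lift
  map_mul' _ _ := Abelianization.hom_ext _ _ rfl

end Duality

section PresentedGroup

open Multiplicative

variable {α : Type*} (rels : Set (FreeGroup α)) (M : Type*) [AddCommGroup M]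

/-- The homomorphism sending an `M`-valued character of a presented group to its values on the
generators.  Its source is written multiplicatively and its target additively, so that its range
can be compared with the solution set of a linear system. -/
def generatorValues : Additive (PresentedGroup rels →* Multiplicative M) →+ (α → M) where
  toFun φ a := (φ.toMul (PresentedGroup.of a)).toAdd
  map_zero' := rfl
  map_add' _ _ := rfl

theorem generatorValues_injective : Function.Injective (generatorValues rels M) :=
  fun _ _ h => Additive.toMul.injective <| PresentedGroup.ext fun a =>
    toAdd.injective (congrFun h a)

variable {rels M}

theorem mem_range_generatorValues {x : α → M} :
    x ∈ (generatorValues rels M).range ↔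
      ∀ r ∈ rels, FreeGroup.lift (fun a => ofAdd (x a)) r = 1 := by
  constructor
  · rintro ⟨φ, rfl⟩ r hr
    have lift_eq : FreeGroup.lift (fun a => ofAdd (generatorValues rels M φ a)) =
        φ.toMul.comp (PresentedGroup.mk rels) := FreeGroup.ext_hom _ _ fun a => by
      rw [FreeGroup.lift_apply_of]
      rfl
    rw [lift_eq, MonoidHom.comp_apply, PresentedGroup.one_of_mem hr, map_one]
  · intro h
    refine ⟨Additive.ofMul (PresentedGroup.toGroup h), funext fun a => ?_⟩
    exact congrArg toAdd (PresentedGroup.toGroup.of h)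

theorem exponent_abelianization_dvd {n : ℕ}
    (h : ∀ a, (PresentedGroup.of a : PresentedGroup rels) ^ n = 1) :
    Monoid.exponent (Abelianization (PresentedGroup rels)) ∣ n := by
  have pow_eq_one : powMonoidHom (α := Abelianization (PresentedGroup rels)) n = 1 :=
    Abelianization.hom_ext _ _ <| PresentedGroup.ext fun a => by
      simp [← map_pow, h a]
  exact Monoid.exponent_dvd_of_forall_pow_eq_one (DFunLike.congr_fun pow_eq_one)

theorem nonempty_abelianization_addEquiv_range_generatorValues [Finite α] {n : ℕ} [NeZero n]
    (h : ∀ a, (PresentedGroup.of a : PresentedGroup rels) ^ n = 1) :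
    Nonempty (Additive (Abelianization (PresentedGroup rels)) ≃+
      (generatorValues rels (ZMod n)).range) := by
  have : Group.FG (PresentedGroup rels) :=
    Group.fg_of_surjective (PresentedGroup.mk_surjective rels)
  have : Group.FG (Abelianization (PresentedGroup rels)) :=
    Group.fg_of_surjective (f := Abelianization.of) QuotientGroup.mk_surjective
  obtain ⟨toDual⟩ := nonempty_mulEquiv_monoidHom_zmod (exponent_abelianization_dvd h)
  exact ⟨(toDual.trans (abelianizationLiftMulEquiv _ _).symm).toAdditive.trans
    (AddMonoidHom.ofInjective (generatorValues_injective rels (ZMod n)))⟩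

end PresentedGroup

theorem commutator_eq_top_iff_subsingleton_abelianization {G : Type*} [Group G] :
    commutator G = ⊤ ↔ Subsingleton (Abelianization G) :=
  QuotientGroup.subsingleton_iff.symm

section SingerLattice

variable {q : ℕ} {δ : Fin 3 → Fin (q + 1) → ZMod (q ^ 2 + q + 1)}

theorem singerRels_of_pow_eq_one (i : Fin 3) :
    (PresentedGroup.of i : PresentedGroup (singerRels q δ)) ^ (q ^ 2 + q + 1) = 1 := by
  rw [PresentedGroup.of, ← map_pow]
  exact PresentedGroup.one_of_mem (Or.inl ⟨i, rfl⟩)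

theorem forall_singerRels_lift_eq_one_iff {x : Fin 3 → ZMod (q ^ 2 + q + 1)} :
    (∀ r ∈ singerRels q δ, FreeGroup.lift (fun i => Multiplicative.ofAdd (x i)) r = 1) ↔
      ∀ j, δ 0 j * x 0 + δ 1 j * x 1 + δ 2 j * x 2 = 0 := by
  have lift_pow (i : Fin 3) :
      FreeGroup.lift (fun i => Multiplicative.ofAdd (x i)) (.of i ^ (q ^ 2 + q + 1)) = 1 := by
    rw [map_pow, FreeGroup.lift_apply_of, ← ofAdd_nsmul, ZModModule.char_nsmul_eq_zero, ofAdd_zero]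
  have lift_mixed (j : Fin (q + 1)) :
      FreeGroup.lift (fun i => Multiplicative.ofAdd (x i))
          (.of 0 ^ (δ 0 j).val * .of 1 ^ (δ 1 j).val * .of 2 ^ (δ 2 j).val) =
        Multiplicative.ofAdd (δ 0 j * x 0 + δ 1 j * x 1 + δ 2 j * x 2) := by
    simp only [map_mul, map_pow, FreeGroup.lift_apply_of, ← ofAdd_nsmul, ← ofAdd_add,
      nsmul_eq_mul, ZMod.natCast_zmod_val]
  constructor
  · intro h j
    exact ofAdd_eq_one.mp ((lift_mixed j).symm.trans (h _ (Or.inr ⟨j, rfl⟩)))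
  · rintro h r (⟨i, rfl⟩ | ⟨j, rfl⟩)
    · exact lift_pow i
    · rw [lift_mixed, h, ofAdd_zero]

theorem mem_ker_diffMap {x : Fin 3 → ZMod (q ^ 2 + q + 1)} :
    x ∈ LinearMap.ker (diffMap q δ) ↔
      ∀ j : Fin q, δ 0 j.succ * x 0 + δ 1 j.succ * x 1 + δ 2 j.succ * x 2 = 0 := by
  simp [diffMap, funext_iff, Matrix.mulVec, dotProduct, Fin.sum_univ_three]

theorem range_generatorValues_singerRels (h0 : ∀ i, δ i 0 = 0) :
    (generatorValues (singerRels q δ) (ZMod (q ^ 2 + q + 1))).range =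
      (LinearMap.ker (diffMap q δ)).toAddSubgroup := by
  ext x
  rw [mem_range_generatorValues, forall_singerRels_lift_eq_one_iff, Submodule.mem_toAddSubgroup,
    mem_ker_diffMap, Fin.forall_fin_succ]
  simp [h0]

theorem nonempty_abelianization_addEquiv_ker_diffMap (h0 : ∀ i, δ i 0 = 0) :
    Nonempty (Additive (Abelianization (SingerLattice q δ)) ≃+ LinearMap.ker (diffMap q δ)) := by
  obtain ⟨e⟩ := nonempty_abelianization_addEquiv_range_generatorValues
    (singerRels_of_pow_eq_one (q := q) (δ := δ))
  exact ⟨e.trans (AddEquiv.addSubgroupCongr (range_generatorValues_singerRels h0))⟩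

end SingerLattice

theorem statement5_general (q : ℕ) (δ : Fin 3 → Fin (q + 1) → ZMod (q ^ 2 + q + 1))
    (h0 : ∀ i, δ i 0 = 0) :
    Nonempty (Additive (Abelianization (SingerLattice q δ)) ≃+ LinearMap.ker (diffMap q δ)) ∧
      (commutator (SingerLattice q δ) = ⊤ ↔ Function.Injective (diffMap q δ)) := by
  obtain ⟨e⟩ := nonempty_abelianization_addEquiv_ker_diffMap h0
  refine ⟨⟨e⟩, ?_⟩
  calc commutator (SingerLattice q δ) = ⊤
    _ ↔ Subsingleton (Abelianization (SingerLattice q δ)) :=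
      commutator_eq_top_iff_subsingleton_abelianization
    _ ↔ Subsingleton (LinearMap.ker (diffMap q δ)) :=
      (Additive.ofMul.trans e.toEquiv).subsingleton_congr
    _ ↔ Function.Injective (diffMap q δ) := by
      rw [Submodule.subsingleton_iff_eq_bot, LinearMap.ker_eq_bot]

/-- Let `q ≥ 2` be a prime power, `N = q² + q + 1`, and let
`δ₁, δ₂, δ₃ : {0, …, q} → ZMod N` be injections with `δᵢ(0) = 0` whose images are planar
difference sets of order `q`.  Let `Γ` be the group presented by
`⟨σ₁, σ₂, σ₃ ∣ σᵢ^N = 1, σ₁^{δ₁(j)} σ₂^{δ₂(j)} σ₃^{δ₃(j)} = 1 for all j⟩`.  Then the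
abelianization of `Γ` is isomorphic to the kernel of the linear map
`𝒟 : (ZMod N)³ → (ZMod N)^q`, `𝒟(x₁,x₂,x₃) = (δ₁(j)x₁ + δ₂(j)x₂ + δ₃(j)x₃)_{j=1,…,q}`;
in particular `Γ` is perfect if and only if `𝒟` is injective. -/
theorem statement5 (q : ℕ) (hq : IsPrimePow q)
    (δ : Fin 3 → Fin (q + 1) → ZMod (q ^ 2 + q + 1))
    (hinj : ∀ i, Function.Injective (δ i))
    (h0 : ∀ i, δ i 0 = 0)
    (hpds : ∀ i, IsPlanarDifferenceSet q (Set.range (δ i))) :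
    Nonempty (Additive (Abelianization (SingerLattice q δ)) ≃+ LinearMap.ker (diffMap q δ)) ∧
      (commutator (SingerLattice q δ) = ⊤ ↔ Function.Injective (diffMap q δ)) :=
  statement5_general q δ h0

end Stmt5
end
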